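/- arXiv:1910.06182 — 3 statements merged into one kernel-verified Lean document; each statement's English description precedes it below -/
import Mathlib

section
/- For any n×n Cartan matrix A of a finite-dimensional complex simple Lie algebra and any reduced word ι = (i_1,…,i_k) of an element of the Weyl group of A, the cellular crystal B_ι is connected, i.e., the crystal graph on ℤ^k is a connected graph. -/
/-!
STATEMENT 0: For any n×n Cartan matrix A of a finite-dimensional complex simple
Lie algebra and any reduced word ι = (i_1,…,i_k) of an element of the Weyl group
of A, the cellular crystal B_ι is connected, i.e. the crystal graph on ℤ^k is a
connected graph.
-/

/-- The simple reflection `s_i` of the Cartan matrix `a`, acting on the root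
lattice (tensored with `ℚ`), `s_i(α_j) = α_j - a_{ij} α_i`. -/
def sRefl {n : ℕ} (a : Fin n → Fin n → ℤ) (i : Fin n) : (Fin n → ℚ) → (Fin n → ℚ) :=
  fun v => v - (∑ j, (a i j : ℚ) * v j) • (Pi.single i 1 : Fin n → ℚ)

/-- The product `s_{i_1} s_{i_2} ⋯ s_{i_k}` of simple reflections along a word. -/
def wProd {n : ℕ} (a : Fin n → Fin n → ℤ) (l : List (Fin n)) : (Fin n → ℚ) → (Fin n → ℚ) :=
  (l.map (sRefl a)).foldr (· ∘ ·) id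

/-- An `n×n` Cartan matrix of a finite-dimensional complex simple Lie algebra:
an indecomposable generalized Cartan matrix whose Weyl group is finite. -/
structure SimpleCartanMatrix (n : ℕ) where
  a : Fin n → Fin n → ℤ
  npos : 0 < n
  diag : ∀ i, a i i = 2
  offdiag_nonpos : ∀ i j, i ≠ j → a i j ≤ 0
  zero_symm : ∀ i j, a i j = 0 → a j i = 0
  indecomposable : ∀ S : Set (Fin n), (∀ i ∈ S, ∀ j, j ∉ S → a i j = 0) → S = ∅ ∨ S = Set.univ
  finiteWeyl : Set.Finite {w : (Fin n → ℚ) → (Fin n → ℚ) | ∃ l : List (Fin n), w = wProd a l}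

/-- A word is reduced if it has minimal length among all words representing the
same Weyl group element. -/
def IsReducedList {n : ℕ} (a : Fin n → Fin n → ℤ) (l : List (Fin n)) : Prop :=
  ∀ l' : List (Fin n), wProd a l' = wProd a l → l.length ≤ l'.length

/-- The function `a_m(x) = -x_m - ∑_{ν<m} a_{i,i_ν} x_ν` (for `m` with `i_m = i`). -/
def cellA {n k : ℕ} (a : Fin n → Fin n → ℤ) (ι : Fin k → Fin n) (i : Fin n)
    (x : Fin k → ℤ) (m : Fin k) : ℤ :=
  - x m - ∑ ν ∈ Finset.univ.filter (fun ν => ν < m), a i (ι ν) * x ν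

/-- The set of indices `m` with `i_m = i` at which `a_m(x)` attains its minimum. -/
def argminSet {n k : ℕ} (a : Fin n → Fin n → ℤ) (ι : Fin k → Fin n) (i : Fin n)
    (x : Fin k → ℤ) : Finset (Fin k) :=
  (Finset.univ.filter (fun m => ι m = i)).filter
    (fun m => ∀ m' ∈ Finset.univ.filter (fun m' => ι m' = i), cellA a ι i x m ≤ cellA a ι i x m')

/-- The Kashiwara operator `ẽ_i` of the cellular crystal `B_ι` on `ℤ^k`:
increase the `k_e(x)`-th coordinate by 1, where `k_e(x)` is the smallest index
`m` with `i_m = i` at which `a_m(x)` attains its minimum. -/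
def kashE {n k : ℕ} (a : Fin n → Fin n → ℤ) (ι : Fin k → Fin n) (i : Fin n)
    (x : Fin k → ℤ) : Fin k → ℤ :=
  if h : (argminSet a ι i x).Nonempty then
    Function.update x ((argminSet a ι i x).min' h) (x ((argminSet a ι i x).min' h) + 1)
  else x

/-- The Kashiwara operator `f̃_i` of the cellular crystal `B_ι` on `ℤ^k`:
decrease the `k_f(x)`-th coordinate by 1, where `k_f(x)` is the largest index
`m` with `i_m = i` at which `a_m(x)` attains its minimum. -/
def kashF {n k : ℕ} (a : Fin n → Fin n → ℤ) (ι : Fin k → Fin n) (i : Fin n)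
    (x : Fin k → ℤ) : Fin k → ℤ :=
  if h : (argminSet a ι i x).Nonempty then
    Function.update x ((argminSet a ι i x).max' h) (x ((argminSet a ι i x).max' h) - 1)
  else x

/-- The edge relation of the crystal graph of `B_ι`: an edge between `x` and
`f̃_i(x)` for every `x` and every `i` occurring in `ι`. -/
def cellEdge {n k : ℕ} (a : Fin n → Fin n → ℤ) (ι : Fin k → Fin n)
    (x y : Fin k → ℤ) : Prop :=
  ∃ i : Fin n, (∃ m, ι m = i) ∧ (kashF a ι i x = y ∨ kashF a ι i y = x)

/-! ### Part 1: roots -/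

section roots
variable {n : ℕ}

/-- pairing with simple coroot -/
def hp (a : Fin n → Fin n → ℤ) (i : Fin n) (v : Fin n → ℚ) : ℚ := ∑ j, (a i j : ℚ) * v j

/-- simple root -/
def sr (i : Fin n) : Fin n → ℚ := Pi.single i 1

theorem sRefl_eq (a : Fin n → Fin n → ℤ) (i : Fin n) (v : Fin n → ℚ) :
    sRefl a i v = v - hp a i v • sr i := rfl

theorem hp_add (a : Fin n → Fin n → ℤ) (i : Fin n) (v w : Fin n → ℚ) :
    hp a i (v + w) = hp a i v + hp a i w := by
  simp [hp, mul_add, Finset.sum_add_distrib]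

theorem hp_smul (a : Fin n → Fin n → ℤ) (i : Fin n) (c : ℚ) (v : Fin n → ℚ) :
    hp a i (c • v) = c * hp a i v := by
  simp only [hp, Pi.smul_apply, smul_eq_mul, Finset.mul_sum]
  exact Finset.sum_congr rfl fun _ _ => by ring

theorem hp_sub (a : Fin n → Fin n → ℤ) (i : Fin n) (v w : Fin n → ℚ) :
    hp a i (v - w) = hp a i v - hp a i w := by
  simp [hp, mul_sub, Finset.sum_sub_distrib]

theorem hp_sr (a : Fin n → Fin n → ℤ) (i j : Fin n) : hp a i (sr j) = a i j := by
  simp [hp, sr, Pi.single_apply]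

theorem sRefl_add (a : Fin n → Fin n → ℤ) (i : Fin n) (v w : Fin n → ℚ) :
    sRefl a i (v + w) = sRefl a i v + sRefl a i w := by
  simp only [sRefl_eq, hp_add, add_smul]; abel

theorem sRefl_smul (a : Fin n → Fin n → ℤ) (i : Fin n) (c : ℚ) (v : Fin n → ℚ) :
    sRefl a i (c • v) = c • sRefl a i v := by
  simp only [sRefl_eq, hp_smul, smul_sub, mul_smul]

theorem wProd_nil (a : Fin n → Fin n → ℤ) (v : Fin n → ℚ) : wProd a [] v = v := rfl

theorem wProd_cons (a : Fin n → Fin n → ℤ) (i : Fin n) (l : List (Fin n)) (v : Fin n → ℚ) :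
    wProd a (i :: l) v = sRefl a i (wProd a l v) := rfl

theorem wProd_append (a : Fin n → Fin n → ℤ) (l l' : List (Fin n)) (v : Fin n → ℚ) :
    wProd a (l ++ l') v = wProd a l (wProd a l' v) := by
  induction l with
  | nil => rfl
  | cons i l ih => rw [List.cons_append, wProd_cons, wProd_cons, ih]

theorem wProd_add (a : Fin n → Fin n → ℤ) (l : List (Fin n)) (v w : Fin n → ℚ) :
    wProd a l (v + w) = wProd a l v + wProd a l w := by
  induction l with
  | nil => rfl
  | cons i l ih => rw [wProd_cons, wProd_cons, wProd_cons, ih, sRefl_add]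

theorem wProd_smul (a : Fin n → Fin n → ℤ) (l : List (Fin n)) (c : ℚ) (v : Fin n → ℚ) :
    wProd a l (c • v) = c • wProd a l v := by
  induction l with
  | nil => rfl
  | cons i l ih => rw [wProd_cons, wProd_cons, ih, sRefl_smul]

theorem sRefl_hp (C : SimpleCartanMatrix n) (i : Fin n) (v : Fin n → ℚ) :
    hp C.a i (sRefl C.a i v) = - hp C.a i v := by
  rw [sRefl_eq, hp_sub, hp_smul, hp_sr, C.diag]; push_cast; ring

theorem sRefl_invol (C : SimpleCartanMatrix n) (i : Fin n) (v : Fin n → ℚ) :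
    sRefl C.a i (sRefl C.a i v) = v := by
  rw [sRefl_eq C.a i (sRefl C.a i v), sRefl_hp, sRefl_eq]; simp

theorem wProd_reverse (C : SimpleCartanMatrix n) (l : List (Fin n)) (v : Fin n → ℚ) :
    wProd C.a l (wProd C.a l.reverse v) = v := by
  induction l generalizing v with
  | nil => rfl
  | cons i l ih =>
    rw [List.reverse_cons, wProd_append, wProd_cons, ih, wProd_cons, wProd_nil, sRefl_invol]

theorem exists_form (C : SimpleCartanMatrix n) :
    ∃ B : (Fin n → ℚ) →ₗ[ℚ] (Fin n → ℚ) →ₗ[ℚ] ℚ,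
      (∀ v w, B v w = B w v) ∧ (∀ v, v ≠ 0 → 0 < B v v) ∧
      (∀ i v w, B (sRefl C.a i v) (sRefl C.a i w) = B v w) := by
  classical
  set G := C.finiteWeyl.toFinset with hG
  have hmem : ∀ g, g ∈ G ↔ ∃ l, g = wProd C.a l := by intro g; simp [hG]
  have hadd : ∀ g ∈ G, ∀ v w, g (v + w) = g v + g w := by
    intro g hg v w; obtain ⟨l, rfl⟩ := (hmem g).1 hg; exact wProd_add _ _ _ _
  have hsmul : ∀ g ∈ G, ∀ (c : ℚ) v, g (c • v) = c • g v := by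
    intro g hg v w; obtain ⟨l, rfl⟩ := (hmem g).1 hg; exact wProd_smul _ _ _ _
  refine ⟨LinearMap.mk₂ ℚ (fun v w => ∑ g ∈ G, ∑ j, g v j * g w j) ?_ ?_ ?_ ?_, ?_, ?_, ?_⟩
  · intro v v' w
    rw [← Finset.sum_add_distrib]
    refine Finset.sum_congr rfl fun g hg => ?_
    rw [← Finset.sum_add_distrib, hadd g hg]
    exact Finset.sum_congr rfl fun j _ => by rw [Pi.add_apply, add_mul]
  · intro c v w
    rw [Finset.smul_sum]
    refine Finset.sum_congr rfl fun g hg => ?_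
    rw [Finset.smul_sum, hsmul g hg]
    exact Finset.sum_congr rfl fun j _ => by simp [mul_assoc]
  · intro v w w'
    rw [← Finset.sum_add_distrib]
    refine Finset.sum_congr rfl fun g hg => ?_
    rw [← Finset.sum_add_distrib, hadd g hg]
    exact Finset.sum_congr rfl fun j _ => by rw [Pi.add_apply, mul_add]
  · intro c v w
    rw [Finset.smul_sum]
    refine Finset.sum_congr rfl fun g hg => ?_
    rw [Finset.smul_sum, hsmul g hg]
    exact Finset.sum_congr rfl fun j _ => by simp [mul_left_comm]
  · intro v w
    simp only [LinearMap.mk₂_apply]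
    exact Finset.sum_congr rfl fun g _ => Finset.sum_congr rfl fun j _ => mul_comm _ _
  · intro v hv
    simp only [LinearMap.mk₂_apply]
    refine Finset.sum_pos' (fun g _ => Finset.sum_nonneg fun j _ => mul_self_nonneg _) ?_
    refine ⟨wProd C.a [], (hmem _).2 ⟨[], rfl⟩, ?_⟩
    obtain ⟨j, hj⟩ := Function.ne_iff.1 hv
    refine Finset.sum_pos' (fun j _ => mul_self_nonneg _) ⟨j, Finset.mem_univ _, ?_⟩
    exact mul_self_pos.2 hj
  · intro i v w
    simp only [LinearMap.mk₂_apply]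
    have key : ∀ g ∈ G, g ∘ sRefl C.a i ∈ G := by
      intro g hg
      obtain ⟨l, rfl⟩ := (hmem g).1 hg
      refine (hmem _).2 ⟨l ++ [i], ?_⟩
      funext v
      rw [wProd_append]; rfl
    refine Finset.sum_bij' (fun g _ => g ∘ sRefl C.a i) (fun g _ => g ∘ sRefl C.a i)
      key key ?_ ?_ ?_
    · intro g _; funext v; simp [sRefl_invol]
    · intro g _; funext v; simp [sRefl_invol]
    · intro g _; rfl

theorem even_sum_symm (M : Fin n → Fin n → ℤ) (hs : ∀ i j, M i j = M j i)
    (hd : ∀ i, Even (M i i)) : Even (∑ i, ∑ j, M i j) := by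
  rw [← ZMod.intCast_eq_zero_iff_even]
  push_cast
  rw [← Finset.sum_product']
  refine Finset.sum_involution (fun p _ => (p.2, p.1)) ?_ ?_ ?_ ?_
  · rintro ⟨i, j⟩ _
    simp only [hs j i]
    exact CharTwo.add_self_eq_zero _
  · rintro ⟨i, j⟩ _ h1 h2
    simp only [Prod.mk.injEq] at h2
    obtain ⟨rfl, -⟩ := h2
    exact h1 ((ZMod.intCast_eq_zero_iff_even).2 (hd _))
  · intro p _; simp
  · intro p _; rfl

/-- Data of invariant form. -/
structure InvForm (C : SimpleCartanMatrix n) where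
  B : (Fin n → ℚ) →ₗ[ℚ] (Fin n → ℚ) →ₗ[ℚ] ℚ
  symm : ∀ v w, B v w = B w v
  pos : ∀ v, v ≠ 0 → 0 < B v v
  inv : ∀ i v w, B (sRefl C.a i v) (sRefl C.a i w) = B v w

variable {C : SimpleCartanMatrix n} (F : InvForm C)

theorem sr_ne (i : Fin n) : (sr i : Fin n → ℚ) ≠ 0 := by
  intro h; have := congrFun h i; simp [sr] at this

theorem vec_sum (v : Fin n → ℚ) : v = ∑ j, v j • sr j := by
  funext k
  simp [sr, Finset.sum_apply, Pi.single_apply]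

namespace InvForm

/-- squared length of simple root -/
def d (j : Fin n) : ℚ := F.B (sr j) (sr j)

theorem d_pos (j : Fin n) : 0 < F.d j := F.pos _ (sr_ne j)

theorem two_B (v : Fin n → ℚ) (j : Fin n) : 2 * F.B v (sr j) = hp C.a j v * F.d j := by
  have h := F.inv j v (sr j)
  rw [sRefl_eq, sRefl_eq, hp_sr, C.diag] at h
  simp only [map_sub, map_smul, LinearMap.sub_apply, LinearMap.smul_apply, smul_eq_mul] at h
  unfold d
  push_cast at h
  linarith

theorem B_wProd (l : List (Fin n)) (v w : Fin n → ℚ) :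
    F.B (wProd C.a l v) (wProd C.a l w) = F.B v w := by
  induction l with
  | nil => rfl
  | cons i l ih => rw [wProd_cons, wProd_cons, F.inv, ih]

theorem a_d (j l : Fin n) : (C.a j l : ℚ) * F.d j = C.a l j * F.d l := by
  have h1 := F.two_B (sr l) j
  have h2 := F.two_B (sr j) l
  rw [hp_sr] at h1 h2
  rw [← h1, ← h2, F.symm]

theorem B_expand (v w : Fin n → ℚ) :
    F.B v w = ∑ j, ∑ l, v j * w l * F.B (sr j) (sr l) := by
  conv_lhs => rw [vec_sum v, vec_sum w]
  simp only [map_sum, LinearMap.sum_apply, map_smul, LinearMap.smul_apply, smul_eq_mul,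
    Finset.mul_sum]
  rw [Finset.sum_comm]
  refine Finset.sum_congr rfl fun j _ => Finset.sum_congr rfl fun l _ => by ring

/-- integrality condition -/
def Integ (i : Fin n) (β : Fin n → ℚ) : Prop :=
  ∀ j, (∃ z : ℤ, β j = z) ∧ (∃ z : ℤ, β j * F.d j = z * F.d i)

theorem integ_sr (i : Fin n) : F.Integ i (sr i) := by
  intro j
  by_cases h : j = i
  · subst h; exact ⟨⟨1, by simp [sr]⟩, ⟨1, by simp [sr]⟩⟩
  · exact ⟨⟨0, by simp [sr, h]⟩, ⟨0, by simp [sr, h]⟩⟩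

theorem integ_sRefl (i l : Fin n) (β : Fin n → ℚ) (h : F.Integ i β) :
    F.Integ i (sRefl C.a l β) := by
  intro j
  by_cases hj : j = l
  · subst hj
    choose h1 h2 using h
    choose z hz using h1
    choose z' hz' using h2
    have e : sRefl C.a j β j = β j - hp C.a j β := by simp [sRefl_eq, sr]
    constructor
    · refine ⟨z j - ∑ m, C.a j m * z m, ?_⟩
      rw [e]; push_cast
      simp only [hp, hz]
    · refine ⟨z' j - ∑ m, C.a m j * z' m, ?_⟩
      rw [e]; push_cast
      rw [sub_mul, sub_mul, hz', hp, Finset.sum_mul, Finset.sum_mul]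
      congr 1
      refine Finset.sum_congr rfl fun m _ => ?_
      have := F.a_d j m
      calc (C.a j m : ℚ) * β m * F.d j = β m * (C.a j m * F.d j) := by ring
        _ = C.a m j * (β m * F.d m) := by rw [this]; ring
        _ = _ := by rw [hz']; ring
  · have e : sRefl C.a l β j = β j := by simp [sRefl_eq, sr, hj]
    rw [e]; exact h j

theorem integ_wProd (i : Fin n) (l : List (Fin n)) (β : Fin n → ℚ) (h : F.Integ i β) :
    F.Integ i (wProd C.a l β) := by
  induction l with
  | nil => exact h
  | cons j l ih => rw [wProd_cons]; exact F.integ_sRefl i j _ ih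

theorem integ_norm (i : Fin n) (β : Fin n → ℚ) (h : F.Integ i β) :
    ∃ z : ℤ, F.B β β = z * F.d i := by
  choose h1 h2 using h
  choose z hz using h1
  choose z' hz' using h2
  have hM : ∀ j l, ((z' j * z l * C.a j l : ℤ) : ℚ) * F.d i
      = 2 * (β j * β l * F.B (sr j) (sr l)) := by
    intro j l
    have := F.two_B (sr l) j
    rw [hp_sr, F.symm] at this
    push_cast
    rw [← hz]
    calc (z' j : ℚ) * β l * C.a j l * F.d i = (z' j * F.d i) * β l * C.a j l := by ring
      _ = β j * β l * (C.a j l * F.d j) := by rw [← hz']; ring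
      _ = _ := by rw [← this]; ring
  have hsym : ∀ j l, z' j * z l * C.a j l = z' l * z j * C.a l j := by
    intro j l
    have : ((z' j * z l * C.a j l : ℤ) : ℚ) * F.d i = ((z' l * z j * C.a l j : ℤ) : ℚ) * F.d i := by
      rw [hM, hM, F.symm (sr l)]; ring
    exact_mod_cast mul_right_cancel₀ (F.d_pos i).ne' this
  obtain ⟨y, hy⟩ := even_sum_symm (fun j l => z' j * z l * C.a j l) hsym
    (fun j => by rw [C.diag]; exact (even_two).mul_left _)
  refine ⟨y, ?_⟩
  have : 2 * F.B β β = ((∑ j, ∑ l, z' j * z l * C.a j l : ℤ) : ℚ) * F.d i := by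
    rw [F.B_expand, Finset.mul_sum]
    push_cast
    rw [Finset.sum_mul]
    refine Finset.sum_congr rfl fun j _ => ?_
    rw [Finset.mul_sum, Finset.sum_mul]
    refine Finset.sum_congr rfl fun l _ => ?_
    rw [← hM]; push_cast; rfl
  rw [hy] at this
  push_cast at this
  linarith

theorem integ_norm_ge (i : Fin n) (β : Fin n → ℚ) (h : F.Integ i β) (h0 : β ≠ 0) :
    F.d i ≤ F.B β β := by
  obtain ⟨z, hz⟩ := F.integ_norm i β h
  have hp := F.pos β h0
  have hd := F.d_pos i
  rw [hz] at hp ⊢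
  have : (0 : ℚ) < z := pos_of_mul_pos_left hp hd.le
  have hz1 : (1 : ℚ) ≤ z := by exact_mod_cast this
  nlinarith

theorem sign_coherent (i : Fin n) (β : Fin n → ℚ) (h : F.Integ i β) (hn : F.B β β = F.d i) :
    (∀ j, 0 ≤ β j) ∨ (∀ j, β j ≤ 0) := by
  set p : Fin n → ℚ := fun j => max (β j) 0 with hp
  set q : Fin n → ℚ := fun j => max (-β j) 0 with hq
  have hpq : β = p - q := by
    funext j
    simp only [hp, hq, Pi.sub_apply]
    rcases le_total (β j) 0 with h | h
    · rw [max_eq_right h, max_eq_left (by linarith)]; ring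
    · rw [max_eq_left h, max_eq_right (by linarith)]; ring
  have hip : F.Integ i p := by
    intro j
    rcases le_total (β j) 0 with h' | h'
    · exact ⟨⟨0, by simp [hp, h']⟩, ⟨0, by simp [hp, h']⟩⟩
    · have : p j = β j := by simp [hp, h']
      rw [this]; exact h j
  have hiq : F.Integ i q := by
    intro j
    rcases le_total (β j) 0 with h' | h'
    · have : q j = - β j := by simp [hq, h']
      obtain ⟨⟨z, hz⟩, ⟨z', hz'⟩⟩ := h j
      rw [this]
      exact ⟨⟨-z, by push_cast; rw [hz]⟩, ⟨-z', by push_cast; linarith⟩⟩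
    · exact ⟨⟨0, by simp [hq, h']⟩, ⟨0, by simp [hq, h']⟩⟩
  have hBpq : F.B p q ≤ 0 := by
    rw [F.B_expand]
    refine Finset.sum_nonpos fun j _ => Finset.sum_nonpos fun l _ => ?_
    by_cases hjl : j = l
    · subst hjl
      have : p j * q j = 0 := by
        rcases le_total (β j) 0 with h' | h'
        · have : p j = 0 := by simp [hp, h']
          rw [this]; ring
        · have : q j = 0 := by simp [hq, h']
          rw [this]; ring
      rw [this]; simp
    · have h1 : 0 ≤ p j := le_max_right _ _
      have h2 : 0 ≤ q l := le_max_right _ _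
      have h3 := F.two_B (sr j) l
      rw [hp_sr] at h3
      have h4 : (C.a l j : ℚ) ≤ 0 := by exact_mod_cast C.offdiag_nonpos l j (Ne.symm hjl)
      have h5 := F.d_pos l
      have h6 : F.B (sr j) (sr l) ≤ 0 := by nlinarith
      exact mul_nonpos_of_nonneg_of_nonpos (mul_nonneg h1 h2) h6
  have hexp : F.B β β = F.B p p - 2 * F.B p q + F.B q q := by
    rw [hpq]
    simp only [map_sub, LinearMap.sub_apply]
    rw [F.symm q p]; ring
  have hd := F.d_pos i
  by_cases hp0 : p = 0
  · right; intro j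
    have := congrFun hp0 j
    simpa [hp] using this
  by_cases hq0 : q = 0
  · left; intro j
    have := congrFun hq0 j
    simpa [hq] using this
  have e1 := F.integ_norm_ge i p hip hp0
  have e2 := F.integ_norm_ge i q hiq hq0
  linarith

theorem conj_refl (F : InvForm C) (i j : Fin n) (l : List (Fin n)) (h : wProd C.a l (sr j) = sr i)
    (v : Fin n → ℚ) : sRefl C.a i (wProd C.a l v) = wProd C.a l (sRefl C.a j v) := by
  have hd : F.d i = F.d j := by
    unfold d; rw [← h, F.B_wProd]
  have h1 := F.two_B (wProd C.a l v) i
  have h2 := F.two_B v j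
  rw [← h, F.B_wProd, h2, hd] at h1
  have h3 := mul_right_cancel₀ (F.d_pos j).ne' h1
  have e : sRefl C.a j v = v + (- hp C.a j v) • sr j := by rw [sRefl_eq, neg_smul, sub_eq_add_neg]
  rw [e, wProd_add, wProd_smul, h, sRefl_eq, h3, neg_smul, sub_eq_add_neg]

theorem pos_root (F : InvForm C) (l1 : List (Fin n)) (i : Fin n) (l2 : List (Fin n))
    (hred : IsReducedList C.a (l1 ++ i :: l2)) :
    ∀ pre post, l2 = pre ++ post → ∀ j, 0 ≤ wProd C.a pre.reverse (sr i) j := by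
  intro pre
  induction pre using List.reverseRecOn with
  | nil =>
    intro post _ j
    rw [List.reverse_nil, wProd_nil, sr, Pi.single_apply]
    split_ifs <;> norm_num
  | append_singleton pre j ih =>
    intro post hl
    have hpre := ih (j :: post) (by rw [hl]; simp)
    set β := wProd C.a pre.reverse (sr i) with hβ
    have hrev : wProd C.a (pre ++ [j]).reverse (sr i) = sRefl C.a j β := by
      rw [List.reverse_append]; rfl
    rw [hrev]
    have hint : F.Integ i β := F.integ_wProd i _ _ (F.integ_sr i)
    have hnorm : F.B β β = F.d i := by rw [hβ, F.B_wProd]; rfl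
    rcases F.sign_coherent i (sRefl C.a j β) (F.integ_sRefl i j _ hint)
      (by rw [F.inv, hnorm]) with h | h
    · exact h
    exfalso
    have hz : ∀ m, m ≠ j → β m = 0 := by
      intro m hm
      have e : sRefl C.a j β m = β m := by simp [sRefl_eq, sr, hm]
      have := h m
      rw [e] at this
      exact le_antisymm this (hpre m)
    have hβ' : β = β j • sr j := by
      funext m
      by_cases hm : m = j
      · subst hm; simp [sr]
      · rw [hz m hm]; simp [sr, hm]
    have hn2 : β j * β j * F.d j = F.d i := by
      rw [← hnorm]
      conv_rhs => rw [hβ']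
      simp only [map_smul, LinearMap.smul_apply, smul_eq_mul]
      unfold d; ring
    obtain ⟨⟨c, hc⟩, ⟨z, hz'⟩⟩ := hint j
    have hdj := F.d_pos j
    have hdi := F.d_pos i
    have hc0 : β j ≠ 0 := by
      intro h0; rw [h0] at hn2; simp at hn2; linarith
    have hzc : (z : ℚ) * c = 1 := by
      rw [← hn2, ] at hz'
      have : (β j * F.d j) * 1 = (β j * F.d j) * (z * β j) := by linarith
      have := mul_left_cancel₀ (mul_ne_zero hc0 hdj.ne') this
      rw [← hc]; exact this.symm
    have hzc' : z * c = 1 := by exact_mod_cast hzc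
    have hcn : 0 ≤ c := by
      have := hpre j
      rw [hc] at this; exact_mod_cast this
    have hc1 : c = 1 := by
      rcases Int.eq_one_or_neg_one_of_mul_eq_one (mul_comm z c ▸ hzc') with h | h
      · exact h
      · omega
    have hβj : β = sr j := by
      rw [hβ', hc, hc1]; simp
    have hcj : wProd C.a pre (sr j) = sr i := by
      rw [← hβj, hβ, wProd_reverse]
    have hlen := hred (l1 ++ (pre ++ post)) (by
      funext v
      rw [hl]
      simp only [wProd_append, wProd_cons, wProd_nil]
      rw [F.conj_refl i j pre hcj, sRefl_invol])
    rw [hl] at hlen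
    simp at hlen

end InvForm

theorem exists_dominant (F : InvForm C) :
    ∃ v : Fin n → ℚ, (∀ j, ∃ z : ℤ, v j = z) ∧ ∀ j, 0 < hp C.a j v := by
  let L : (Fin n → ℚ) →ₗ[ℚ] (Fin n → ℚ) :=
    { toFun := fun v j => hp C.a j v
      map_add' := fun v w => by funext j; exact hp_add _ _ _ _
      map_smul' := fun c v => by funext j; exact hp_smul _ _ _ _ }
  have hinj : Function.Injective L := by
    rw [injective_iff_map_eq_zero]
    intro v hv
    by_contra h0
    have h1 : ∀ j, F.B v (sr j) = 0 := by
      intro j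
      have h := F.two_B v j
      have : hp C.a j v = 0 := congrFun hv j
      rw [this] at h; linarith
    have h2 := F.pos v h0
    have h3 : F.B v v = 0 := by
      conv_lhs => rw [vec_sum v]
      rw [← vec_sum v]
      conv_lhs => arg 2; rw [vec_sum v]
      simp [map_sum, h1]
    linarith
  obtain ⟨v, hv⟩ := (LinearMap.injective_iff_surjective.1 hinj) (fun _ => 1)
  have hv' : ∀ j, hp C.a j v = 1 := fun j => congrFun hv j
  set D : ℕ := ∏ j, (v j).den with hD
  have hDpos : 0 < D := Finset.prod_pos fun j _ => (v j).den_pos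
  refine ⟨(D : ℚ) • v, ?_, ?_⟩
  · intro j
    obtain ⟨e, he⟩ : (v j).den ∣ D := Finset.dvd_prod_of_mem _ (Finset.mem_univ j)
    refine ⟨e * (v j).num, ?_⟩
    rw [Pi.smul_apply, smul_eq_mul, he]
    push_cast
    have := Rat.mul_den_eq_num (v j)
    rw [← this]; ring
  · intro j
    rw [hp_smul, hv']
    have : (0 : ℚ) < D := by exact_mod_cast hDpos
    linarith

theorem wProd_int (a : Fin n → Fin n → ℤ) (l : List (Fin n)) (v : Fin n → ℚ)
    (h : ∀ j, ∃ z : ℤ, v j = z) : ∀ j, ∃ z : ℤ, wProd a l v j = z := by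
  induction l with
  | nil => exact h
  | cons i l ih =>
    choose z hz using ih
    intro j
    rw [wProd_cons]
    refine ⟨z j - (∑ m, a i m * z m) * (if j = i then 1 else 0), ?_⟩
    simp [sRefl_eq, hp, hz, sr, Pi.single_apply]

theorem exists_pos_weight (C : SimpleCartanMatrix n) (l : List (Fin n))
    (hred : IsReducedList C.a l) :
    ∃ v : Fin n → ℚ, (∀ j, ∃ z : ℤ, v j = z) ∧
      ∀ l1 i l2, l = l1 ++ i :: l2 → 0 < hp C.a i (wProd C.a l2 v) := by
  obtain ⟨B, h1, h2, h3⟩ := exists_form C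
  let F : InvForm C := ⟨B, h1, h2, h3⟩
  obtain ⟨v, hv, hpos⟩ := exists_dominant F
  refine ⟨v, hv, ?_⟩
  intro l1 i l2 hl
  rw [hl] at hred
  have hβ := F.pos_root l1 i l2 hred l2 [] (by simp)
  set β := wProd C.a l2.reverse (sr i) with hβd
  have e1 := F.two_B (wProd C.a l2 v) i
  have e2 : F.B (wProd C.a l2 v) (sr i) = F.B v β := by
    conv_lhs => rw [← wProd_reverse C l2 (sr i)]
    rw [F.B_wProd]
  have hβ0 : β ≠ 0 := by
    intro h0
    have hb : F.B β β = F.d i := by rw [hβd, F.B_wProd]; rfl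
    rw [h0] at hb
    have := F.d_pos i
    simp at hb
    linarith
  have e3 : 0 < F.B v β := by
    rw [vec_sum β]
    simp only [map_sum, map_smul, smul_eq_mul]
    have hb : ∀ j, 0 < F.B v (sr j) := by
      intro j
      have := F.two_B v j
      have := mul_pos (hpos j) (F.d_pos j)
      linarith
    obtain ⟨j, hj⟩ := Function.ne_iff.1 hβ0
    refine Finset.sum_pos' (fun j _ => mul_nonneg (hβ j) (hb j).le) ⟨j, Finset.mem_univ _, ?_⟩
    exact mul_pos (lt_of_le_of_ne (hβ j) (Ne.symm hj)) (hb j)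
  rw [e2] at e1
  have : 0 < hp C.a i (wProd C.a l2 v) * F.d i := by linarith
  exact pos_of_mul_pos_left this (F.d_pos i).le

end roots

/-! ### Part 2: the translation vector -/

theorem exists_translation {n k : ℕ} (C : SimpleCartanMatrix n)
    (ι : Fin k → Fin n) (hred : IsReducedList C.a (List.ofFn ι)) :
    ∃ u : Fin k → ℤ, (∀ m, 0 < u m) ∧
      ∀ m m', ι m = ι m' → cellA C.a ι (ι m) u m = cellA C.a ι (ι m) u m' := by
  obtain ⟨v, hv, hpos⟩ := exists_pos_weight C _ hred
  set l := List.ofFn ι with hl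
  have hlen : l.length = k := by simp [hl]
  set μ : ℕ → (Fin n → ℚ) := fun q => wProd C.a (l.drop q) v with hμ
  have hdrop : ∀ m : Fin k, l.drop m = ι m :: l.drop (m + 1) := by
    intro m
    rw [List.drop_eq_getElem_cons (by rw [hlen]; exact m.2)]
    simp [hl]
  have hstep : ∀ m : Fin k, μ m = sRefl C.a (ι m) (μ (m + 1)) := by
    intro m
    simp only [hμ]
    rw [hdrop, wProd_cons]
  have hupos : ∀ m : Fin k, 0 < hp C.a (ι m) (μ (m + 1)) := by
    intro m
    refine hpos (l.take m) (ι m) _ ?_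
    rw [← hdrop, List.take_append_drop]
  have hint : ∀ m : Fin k, ∃ z : ℤ, hp C.a (ι m) (μ (m + 1)) = z := by
    intro m
    choose z hz using wProd_int C.a (l.drop (m + 1)) v hv
    refine ⟨∑ j, C.a (ι m) j * z j, ?_⟩
    simp only [hp, hμ, hz]
    push_cast; rfl
  choose u hu using hint
  have key : ∀ i (m : Fin k), ι m = i → (cellA C.a ι i u m : ℚ) = hp C.a i (μ 0) := by
    intro i m him
    have h1 : ∀ ν : Fin k, (C.a i (ι ν) : ℚ) * u ν
        = hp C.a i (μ (ν + 1)) - hp C.a i (μ ν) := by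
      intro ν
      rw [hstep ν, sRefl_eq, hp_sub, hp_smul, hp_sr, hu]; ring
    have h2 : ∑ ν ∈ Finset.univ.filter (fun ν : Fin k => ν < m), (C.a i (ι ν) : ℚ) * u ν
        = hp C.a i (μ m) - hp C.a i (μ 0) := by
      rw [Finset.sum_congr rfl fun ν _ => h1 ν,
        ← Finset.sum_range_sub (fun q => hp C.a i (μ q)) m]
      refine Finset.sum_bij (fun ν _ => (ν : ℕ)) ?_ ?_ ?_ ?_
      · intro ν hν; simpa using hν
      · intro ν _ ν' _ h; exact Fin.ext h
      · intro q hq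
        have hq' : q < m := by simpa using hq
        exact ⟨⟨q, hq'.trans m.2⟩, by
          simp only [Finset.mem_filter, Finset.mem_univ, true_and]
          exact hq', rfl⟩
      · intro ν _; rfl
    have h3 : hp C.a i (μ m) = - u m := by
      rw [hstep m, him, ← him, sRefl_hp, hu]
    unfold cellA
    push_cast
    rw [h2, h3]; ring
  refine ⟨u, ?_, ?_⟩
  · intro m
    have := hupos m
    rw [hu] at this; exact_mod_cast this
  · intro m m' h
    have h1 := key _ m rfl
    have h2 := key (ι m) m' h.symm
    exact_mod_cast h1.trans h2.symm

/-! ### Part 3: dynamics -/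

section dyn
variable {n k : ℕ} (a : Fin n → Fin n → ℤ) (ι : Fin k → Fin n)

theorem cellA_add (i : Fin n) (x y : Fin k → ℤ) (m : Fin k) :
    cellA a ι i (x + y) m = cellA a ι i x m + cellA a ι i y m := by
  simp only [cellA, Pi.add_apply, mul_add, Finset.sum_add_distrib]; ring

theorem cellA_smul (i : Fin n) (c : ℤ) (x : Fin k → ℤ) (m : Fin k) :
    cellA a ι i (c • x) m = c * cellA a ι i x m := by
  simp only [cellA, Pi.smul_apply, smul_eq_mul, mul_sub, Finset.mul_sum]
  congr 1
  · ring
  · exact Finset.sum_congr rfl fun _ _ => by ring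

theorem cellA_single (i : Fin n) (p : Fin k) (c : ℤ) (m : Fin k) :
    cellA a ι i (Pi.single p c) m
      = (if m = p then -c else 0) - (if p < m then a i (ι p) * c else 0) := by
  simp only [cellA, Pi.single_apply]
  congr 1
  · split_ifs <;> simp
  · simp only [mul_ite, mul_zero, Finset.sum_ite_eq', Finset.mem_filter, Finset.mem_univ, true_and]

theorem dec_eq (x : Fin k → ℤ) (m : Fin k) :
    Function.update x m (x m - 1) = x + Pi.single m (-1) := by
  funext j
  by_cases h : j = m
  · subst h; simp; ring
  · simp [h]

theorem kashF_eq (i : Fin n) (x : Fin k → ℤ) (m : Fin k) (hm : ι m = i)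
    (h1 : ∀ m', ι m' = i → cellA a ι i x m ≤ cellA a ι i x m')
    (h2 : ∀ m', ι m' = i → m < m' → cellA a ι i x m < cellA a ι i x m') :
    kashF a ι i x = x + Pi.single m (-1) := by
  have hmem : m ∈ argminSet a ι i x := by
    simp only [argminSet, Finset.mem_filter, Finset.mem_univ, true_and]
    exact ⟨hm, h1⟩
  have hne : (argminSet a ι i x).Nonempty := ⟨m, hmem⟩
  have hmax : (argminSet a ι i x).max' hne = m := by
    refine le_antisymm (Finset.max'_le _ _ _ ?_) (Finset.le_max' _ _ hmem)
    intro m' hm'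
    simp only [argminSet, Finset.mem_filter, Finset.mem_univ, true_and] at hm'
    by_contra hlt
    have := h2 m' hm'.1 (not_le.1 hlt)
    have := hm'.2 m hm
    omega
  rw [kashF, dif_pos hne, hmax, dec_eq]

/-- Reachability -/
abbrev Reach (x y : Fin k → ℤ) : Prop := Relation.ReflTransGen (cellEdge a ι) x y

theorem edge_symm (x y : Fin k → ℤ) (h : cellEdge a ι x y) : cellEdge a ι y x := by
  obtain ⟨i, hi, h⟩ := h
  exact ⟨i, hi, h.symm⟩

theorem reach_symm (x y : Fin k → ℤ) (h : Reach a ι x y) : Reach a ι y x :=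
by
  induction h with
  | refl => exact Relation.ReflTransGen.refl
  | tail _ h ih => exact Relation.ReflTransGen.head (edge_symm a ι _ _ h) ih

theorem kashF_translate (u : Fin k → ℤ)
    (hu : ∀ m m', ι m = ι m' → cellA a ι (ι m) u m = cellA a ι (ι m) u m')
    (i : Fin n) (x : Fin k → ℤ) (c : ℤ) :
    kashF a ι i (x + c • u) = kashF a ι i x + c • u := by
  have hset : argminSet a ι i (x + c • u) = argminSet a ι i x := by
    ext m
    simp only [argminSet, Finset.mem_filter, Finset.mem_univ, true_and]
    refine and_congr_right fun hm => forall_congr' fun m' => imp_congr_right fun hm' => ?_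
    have := hu m m' (hm.trans hm'.symm)
    rw [hm] at this
    rw [cellA_add, cellA_add, cellA_smul, cellA_smul, this]
    constructor <;> intro h <;> linarith
  unfold kashF
  by_cases h : (argminSet a ι i x).Nonempty
  · rw [dif_pos (hset ▸ h), dif_pos h]
    simp only [hset]
    rw [dec_eq, dec_eq]; abel
  · rw [dif_neg (hset ▸ h), dif_neg h]

theorem reach_translate (u : Fin k → ℤ)
    (hu : ∀ m m', ι m = ι m' → cellA a ι (ι m) u m = cellA a ι (ι m) u m')
    (x y : Fin k → ℤ) (c : ℤ) (h : Reach a ι x y) : Reach a ι (x + c • u) (y + c • u) := by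
  induction h with
  | refl => exact Relation.ReflTransGen.refl
  | tail _ h ih =>
    refine ih.tail ?_
    obtain ⟨i, hi, h⟩ := h
    refine ⟨i, hi, ?_⟩
    rw [kashF_translate a ι u hu, kashF_translate a ι u hu]
    rcases h with h | h
    · left; rw [h]
    · right; rw [h]

/-- restriction to coordinates at least `p` -/
def res (p : ℕ) (x : Fin k → ℤ) : Fin k → ℤ := fun m => if p ≤ (m : ℕ) then x m else 0

theorem cellA_low (i : Fin n) (p : Fin k) (x : Fin k → ℤ) (hx : ∀ m : Fin k, m < p → x m = 0)
    (m : Fin k) (hm : m ≤ p) : cellA a ι i x m = - x m := by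
  unfold cellA
  rw [Finset.sum_eq_zero]
  · ring
  · intro ν hν
    simp only [Finset.mem_filter, Finset.mem_univ, true_and] at hν
    rw [hx ν (hν.trans_le hm), mul_zero]

theorem cellA_res (u : Fin k → ℤ)
    (hu : ∀ m m', ι m = ι m' → cellA a ι (ι m) u m = cellA a ι (ι m) u m')
    (p m : Fin k) (hpm : p ≤ m) (hι : ι m = ι p) :
    cellA a ι (ι p) (res p u) m = - u p := by
  have hlow : cellA a ι (ι p) (res p u) p = - u p := by
    rw [cellA_low a ι (ι p) p (res p u) _ p le_rfl]
    · simp [res]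
    · intro m hm
      have : ¬ ((p : ℕ) ≤ m) := by simpa using hm
      simp [res, this]
  rw [← hlow]
  set w : Fin k → ℤ := fun m => if (p : ℕ) ≤ m then 0 else u m with hw
  have hsum : u = res p u + w := by
    funext j
    simp only [res, hw, Pi.add_apply]
    split_ifs <;> simp
  have hwc : ∀ q : Fin k, p ≤ q → cellA a ι (ι p) w q
      = - ∑ ν ∈ Finset.univ.filter (fun ν : Fin k => ν < p), a (ι p) (ι ν) * u ν := by
    intro q hq
    have : w q = 0 := by simp only [hw]; exact if_pos hq
    unfold cellA
    rw [this, neg_zero, zero_sub]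
    congr 1
    symm
    have hsub : Finset.univ.filter (fun ν : Fin k => ν < p) ⊆
        Finset.univ.filter (fun ν : Fin k => ν < q) := by
      intro ν hν
      simp only [Finset.mem_filter, Finset.mem_univ, true_and] at hν ⊢
      exact hν.trans_le hq
    rw [← Finset.sum_subset hsub]
    · refine Finset.sum_congr rfl fun ν hν => ?_
      simp only [Finset.mem_filter, Finset.mem_univ, true_and] at hν
      have : ¬ ((p : ℕ) ≤ ν) := by simpa using hν
      simp only [hw]
      rw [if_neg this]
    · intro ν _ hν
      simp only [Finset.mem_filter, Finset.mem_univ, true_and, not_lt] at hν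
      simp only [hw]
      rw [if_pos (show (p : ℕ) ≤ ν from hν), mul_zero]
  have h0 := hu p m hι.symm
  rw [hsum, cellA_add, cellA_add, hwc p le_rfl, hwc m hpm] at h0
  linarith

/-- Potential. -/
def pot (p : Fin k) (x : Fin k → ℤ) : ℕ :=
  ∑ m ∈ Finset.univ.filter (fun m : Fin k => p < m ∧ ι m = ι p),
    (cellA a ι (ι p) x p - cellA a ι (ι p) x m + 1).toNat

theorem phaseA (hdiag : ∀ i, a i i = 2) (u : Fin k → ℤ) (hpos : ∀ m, 0 < u m)
    (hu : ∀ m m', ι m = ι m' → cellA a ι (ι m) u m = cellA a ι (ι m) u m') (p : Fin k) :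
    ∀ (D : ℕ) (x : Fin k → ℤ), (∀ m, m < p → x m = 0) → pot a ι p x = D →
    ∃ x' : Fin k → ℤ, (∀ m, m < p → x' m = 0) ∧
      (∀ m, p < m → ι m = ι p → cellA a ι (ι p) x' p < cellA a ι (ι p) x' m) ∧
      ∃ N0 : ℤ, ∀ N, N0 ≤ N → Reach a ι (x + N • res p u) (x' + N • res p u) := by
  intro D
  induction D using Nat.strong_induction_on with
  | _ D ih =>
  intro x hx hD
  by_cases hall : ∀ m, p < m → ι m = ι p → cellA a ι (ι p) x p < cellA a ι (ι p) x m
  · exact ⟨x, hx, hall, 0, fun N _ => Relation.ReflTransGen.refl⟩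
  push Not at hall
  obtain ⟨m0, hm0, hιm0, hle0⟩ := hall
  -- the set of suffix positions
  set S := Finset.univ.filter (fun m : Fin k => p ≤ m ∧ ι m = ι p) with hS
  have hmS : ∀ m, m ∈ S ↔ p ≤ m ∧ ι m = ι p := by intro m; simp [hS]
  obtain ⟨m1, hm1S, hm1⟩ := Finset.exists_min_image S (cellA a ι (ι p) x)
    ⟨p, (hmS p).2 ⟨le_rfl, rfl⟩⟩
  set T := S.filter (fun m => cellA a ι (ι p) x m = cellA a ι (ι p) x m1) with hT
  obtain ⟨m, hmT, hmmax⟩ := Finset.exists_max_image T id ⟨m1, by simp [hT, hm1S]⟩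
  obtain ⟨hmS', hmeq⟩ := Finset.mem_filter.1 hmT
  have hmin : ∀ m', p ≤ m' → ι m' = ι p → cellA a ι (ι p) x m ≤ cellA a ι (ι p) x m' := by
    intro m' h1 h2
    rw [hmeq]; exact hm1 m' ((hmS _).2 ⟨h1, h2⟩)
  have hstrict : ∀ m', ι m' = ι p → m < m' →
      cellA a ι (ι p) x m < cellA a ι (ι p) x m' := by
    intro m' h1 h2
    have h3 : p ≤ m' := ((hmS _).1 hmS').1.trans h2.le
    refine lt_of_le_of_ne (hmin m' h3 h1) fun he => ?_
    have : m' ∈ T := Finset.mem_filter.2 ⟨(hmS _).2 ⟨h3, h1⟩, by rw [← he, hmeq]⟩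
    exact absurd (hmmax m' this) (not_le.2 h2)
  obtain ⟨hpm, hιm⟩ := (hmS m).1 hmS'
  have hpm' : p < m := by
    refine lt_of_le_of_ne hpm fun he => ?_
    have := hstrict m0 hιm0 (he ▸ hm0)
    rw [← he] at this
    omega
  set x1 := x + Pi.single m (-1) with hx1
  have hx1low : ∀ m', m' < p → x1 m' = 0 := by
    intro m' h
    have : m' ≠ m := (h.trans hpm').ne
    simp [hx1, this, hx m' h]
  have hcell : ∀ m', cellA a ι (ι p) x1 m' = cellA a ι (ι p) x m'
      + ((if m' = m then 1 else 0) + (if m < m' then 2 else 0)) := by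
    intro m'
    rw [hx1, cellA_add, cellA_single, hιm, hdiag]
    split_ifs <;> ring
  have hcp : cellA a ι (ι p) x1 p = cellA a ι (ι p) x p := by
    rw [hcell, if_neg hpm'.ne, if_neg (not_lt.2 hpm)]; ring
  have hlt : pot a ι p x1 < D := by
    rw [← hD]
    unfold pot
    refine Finset.sum_lt_sum ?_ ⟨m, by simp [hpm', hιm], ?_⟩
    · intro m' _
      rw [hcp, hcell]
      refine Int.toNat_le_toNat ?_
      split_ifs <;> omega
    · have := hmin p le_rfl rfl
      rw [hcp, hcell, if_pos rfl, if_neg (lt_irrefl _)]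
      omega
  obtain ⟨x', h1, h2, N0, h3⟩ := ih _ hlt x1 hx1low rfl
  refine ⟨x', h1, h2, max N0 (max 0 (cellA a ι (ι p) x m)), ?_⟩
  intro N hN
  have hN1 : N0 ≤ N := (le_max_left _ _).trans hN
  have hN2 : 0 ≤ N := (le_max_left _ _).trans ((le_max_right _ _).trans hN)
  have hN3 : cellA a ι (ι p) x m ≤ N := (le_max_right _ _).trans ((le_max_right _ _).trans hN)
  have hup := hpos p
  have hreslow : ∀ m', m' < p → res p u m' = 0 := by
    intro m' h
    have : ¬ ((p : ℕ) ≤ m') := by simpa using h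
    simp [res, this]
  have hc : ∀ m', p ≤ m' → ι m' = ι p → cellA a ι (ι p) (x + N • res p u) m'
      = cellA a ι (ι p) x m' - N * u p := by
    intro m' h h'
    rw [cellA_add, cellA_smul, cellA_res a ι u hu p m' h h']; ring
  have hstep : kashF a ι (ι p) (x + N • res p u) = x1 + N • res p u := by
    rw [kashF_eq a ι (ι p) _ m hιm]
    · rw [hx1]; abel
    · intro m' h'
      rcases le_or_gt p m' with h | h
      · rw [hc m hpm hιm, hc m' h h']
        linarith [hmin m' h h']
      · rw [hc m hpm hιm, cellA_low a ι (ι p) p _ _ m' h.le]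
        · simp only [Pi.add_apply, Pi.smul_apply, hx m' h, hreslow m' h]
          simp
          nlinarith
        · intro q hq
          simp [hx q hq, hreslow q hq]
    · intro m' h' hmm'
      rw [hc m hpm hιm, hc m' (hpm.trans hmm'.le) h']
      linarith [hstrict m' h' hmm']
  exact Relation.ReflTransGen.head ⟨ι p, ⟨p, rfl⟩, Or.inl hstep⟩ (h3 N hN1)

theorem phaseB (hdiag : ∀ i, a i i = 2) (p : Fin k) :
    ∀ (t : ℕ) (x : Fin k → ℤ), (∀ m, m < p → x m = 0) → x p = t →
    (∀ m, p < m → ι m = ι p → cellA a ι (ι p) x p < cellA a ι (ι p) x m) →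
      Reach a ι x (Function.update x p 0) := by
  intro t
  induction t with
  | zero =>
    intro x _ h _
    rw [show Function.update x p 0 = x by
      rw [Function.update_eq_self_iff]; simpa using h.symm]
  | succ t ih =>
    intro x hx hxp hall
    have hp : cellA a ι (ι p) x p = -(t + 1) := by
      rw [cellA_low a ι (ι p) p x hx p le_rfl, hxp]; push_cast; ring
    have hstep : kashF a ι (ι p) x = x + Pi.single p (-1) := by
      refine kashF_eq a ι (ι p) x p rfl ?_ (fun m' h h' => hall m' h' h)
      intro m' h
      rcases lt_trichotomy p m' with h' | h' | h'
      · exact (hall m' h' h).le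
      · rw [h']
      · rw [hp, cellA_low a ι (ι p) p x hx m' h'.le, hx m' h']; omega
    have := ih (x + Pi.single p (-1)) ?_ ?_ ?_
    · have he : Function.update (x + Pi.single p (-1)) p 0 = Function.update x p 0 := by
        funext j
        by_cases hj : j = p
        · subst hj; simp
        · simp [hj]
      rw [he] at this
      exact Relation.ReflTransGen.head ⟨ι p, ⟨p, rfl⟩, Or.inl hstep⟩ this
    · intro m h
      simp [hx m h, h.ne]
    · simp [hxp]
    · intro m h h'
      rw [cellA_add, cellA_add, cellA_single, cellA_single, hdiag]
      have := hall m h h'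
      simp [h, h.ne']
      omega

theorem phase (hdiag : ∀ i, a i i = 2) (u : Fin k → ℤ) (hpos : ∀ m, 0 < u m)
    (hu : ∀ m m', ι m = ι m' → cellA a ι (ι m) u m = cellA a ι (ι m) u m') :
    ∀ (r p : ℕ), p + r = k → ∀ x : Fin k → ℤ, (∀ m : Fin k, (m : ℕ) < p → x m = 0) →
      ∃ N0 : ℤ, ∀ N, N0 ≤ N → Reach a ι (x + N • res p u) 0 := by
  intro r
  induction r with
  | zero =>
    intro p hp x hx
    refine ⟨0, fun N _ => ?_⟩
    have : x + N • res p u = 0 := by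
      funext m
      have hm : (m : ℕ) < p := by have := m.2; omega
      have hm' : ¬ (p ≤ (m : ℕ)) := by omega
      simp [hx m hm, res, hm']
    rw [this]
  | succ r ih =>
    intro p hp x hx
    have hpk : p < k := by omega
    set P : Fin k := ⟨p, hpk⟩ with hP
    obtain ⟨x', h1, h2, N0, h3⟩ := phaseA a ι hdiag u hpos hu P _ x (fun m hm => hx m hm) rfl
    obtain ⟨N1, h4⟩ := ih (p + 1) (by omega) (Function.update x' P 0) (by
      intro m hm
      by_cases hmP : m = P
      · subst hmP; simp
      · rw [Function.update_of_ne hmP]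
        refine h1 m ?_
        have : (m : ℕ) ≠ p := fun h => hmP (Fin.ext h)
        rw [Fin.lt_def]
        show (m : ℕ) < p
        omega)
    refine ⟨max (max N0 N1) (max 0 (- x' P)), fun N hN => ?_⟩
    have hN0 : N0 ≤ N := (le_max_left _ _).trans ((le_max_left _ _).trans hN)
    have hN1 : N1 ≤ N := (le_max_right _ _).trans ((le_max_left _ _).trans hN)
    have hN2 : 0 ≤ N := (le_max_left _ _).trans ((le_max_right _ _).trans hN)
    have hN3 : - x' P ≤ N := (le_max_right _ _).trans ((le_max_right _ _).trans hN)
    have hup := hpos P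
    have hresP : res p u P = u P := by simp [res, hP]
    have hlow : ∀ m, m < P → (x' + N • res p u) m = 0 := by
      intro m hm
      have : ¬ (p ≤ (m : ℕ)) := by
        have : (m : ℕ) < p := hm
        omega
      simp [h1 m hm, res, this]
    have hB := phaseB a ι hdiag P ((x' + N • res p u) P).toNat (x' + N • res p u) hlow (by
      rw [Int.toNat_of_nonneg]
      rw [Pi.add_apply, Pi.smul_apply, hresP, smul_eq_mul]
      nlinarith) (by
      intro m hm hm'
      have e1 := cellA_res a ι u hu P P le_rfl rfl
      have e2 := cellA_res a ι u hu P m hm.le hm'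
      rw [cellA_add, cellA_add, cellA_smul, cellA_smul]
      change cellA a ι (ι P) (res p u) P = _ at e1
      change cellA a ι (ι P) (res p u) m = _ at e2
      rw [e1, e2]
      linarith [h2 m hm hm'])
    have he : Function.update (x' + N • res p u) P 0
        = Function.update x' P 0 + N • res (p + 1) u := by
      funext j
      by_cases hj : j = P
      · subst hj; simp [res, hP]
      · have : (j : ℕ) ≠ p := fun h => hj (Fin.ext h)
        have h5 : (p ≤ (j : ℕ)) ↔ (p + 1 ≤ (j : ℕ)) := by omega
        simp only [Function.update_of_ne hj, Pi.add_apply, Pi.smul_apply, res, h5]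
    rw [he] at hB
    exact ((h3 N hN0).trans hB).trans (h4 N hN1)

end dyn

/-- For any Cartan matrix of a finite-dimensional complex simple
Lie algebra and any reduced word `ι` of a Weyl group element, the cellular
crystal `B_ι` is connected. -/
theorem cellular_crystal_connected {n k : ℕ} (C : SimpleCartanMatrix n)
    (ι : Fin k → Fin n) (hred : IsReducedList C.a (List.ofFn ι)) :
    ∀ x y : Fin k → ℤ, Relation.ReflTransGen (cellEdge C.a ι) x y := by
  obtain ⟨u, hpos, hu⟩ := exists_translation C ι hred
  have hzero : ∀ x : Fin k → ℤ, Reach C.a ι x 0 := by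
    have hdeep : ∀ x : Fin k → ℤ, ∃ N0 : ℤ, ∀ N, N0 ≤ N → Reach C.a ι x ((-N) • u) := by
      intro x
      obtain ⟨N0, h⟩ := phase C.a ι C.diag u hpos hu k 0 (by simp) x (by simp)
      refine ⟨N0, fun N hN => ?_⟩
      have h1 := reach_translate C.a ι u hu _ _ (-N) (h N hN)
      have h2 : res 0 u = u := by funext m; simp [res]
      rw [h2] at h1
      simpa using h1
    intro x
    obtain ⟨N0, h0⟩ := hdeep x
    obtain ⟨N1, h1⟩ := hdeep 0
    exact (h0 (max N0 N1) (le_max_left _ _)).trans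
      (reach_symm _ _ _ _ (h1 (max N0 N1) (le_max_right _ _)))
  intro x y
  exact (hzero x).trans (reach_symm _ _ _ _ (hzero y))
end

section
/- Let ι = (i_1,…,i_N) be a reduced word for the longest element w_0 of the Weyl group. For 1 ≤ k ≤ N set α^{(k)} = s_{i_N} s_{i_{N−1}} ⋯ s_{i_{k+1}}(α_{i_k}) in the root system of the Langlands dual algebra, and write α^{(k)} = ∑_{i=1}^n m^{(k)}_i α_i with m^{(k)}_i ∈ ℤ_{≥0}. Then ℋ_ι = { (∑_{i=1}^n m^{(1)}_i h_i, ∑_{i=1}^n m^{(2)}_i h_i, …, ∑_{i=1}^n m^{(N)}_i h_i) : (h_1,…,h_n) ∈ ℤ^n }. -/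
/-- A word is a reduced word for the longest element of the Weyl group iff it is
reduced and of maximal length among all reduced words. -/
def IsLongestWord {n : ℕ} (a : Fin n → Fin n → ℤ) (l : List (Fin n)) : Prop :=
  IsReducedList a l ∧ ∀ l' : List (Fin n), IsReducedList a l' → l'.length ≤ l.length

/-- The linear form `β_k(x) = x_k + ∑_{k<j<k⁺} a_{i_k,i_j} x_j + x_{k⁺}`, where
`k⁺` is the first index after `k` carrying the same letter as `i_k`
(junk value `0` if `k⁺` does not exist). -/
def betaFn {n N : ℕ} (a : Fin n → Fin n → ℤ) (ι : Fin N → Fin n) (k : Fin N)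
    (x : Fin N → ℤ) : ℤ :=
  if h : (Finset.univ.filter (fun l => k < l ∧ ι l = ι k)).Nonempty then
    x k + (∑ j ∈ Finset.univ.filter
        (fun j => k < j ∧ j < (Finset.univ.filter (fun l => k < l ∧ ι l = ι k)).min' h),
        a (ι k) (ι j) * x j)
      + x ((Finset.univ.filter (fun l => k < l ∧ ι l = ι k)).min' h)
  else 0

/-- The set `ℋ_ι = {x ∈ ℤ^N : β_k(x) = 0 for every k such that k⁺ ≤ N}`. -/
def Hset {n N : ℕ} (a : Fin n → Fin n → ℤ) (ι : Fin N → Fin n) : Set (Fin N → ℤ) :=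
  {x | ∀ k : Fin N, (∃ l, k < l ∧ ι l = ι k) → betaFn a ι k x = 0}

/-- The simple reflection of the Langlands dual root system, acting on the dual
root lattice (tensored with ℚ) by `s_i(α_j) = α_j - a_{ji} α_i`. -/
def sReflDual {n : ℕ} (a : Fin n → Fin n → ℤ) (i : Fin n) : (Fin n → ℚ) → (Fin n → ℚ) :=
  fun v => v - (∑ j, (a j i : ℚ) * v j) • (Pi.single i 1 : Fin n → ℚ)

/-- The positive root `α^{(k)} = s_{i_N} s_{i_{N-1}} ⋯ s_{i_{k+1}}(α_{i_k})` of
the Langlands dual root system, expressed in coordinates with respect to the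
simple roots `α_1,…,α_n` (so its `i`-th coordinate is `m^{(k)}_i`). -/
def alphaK {n N : ℕ} (a : Fin n → Fin n → ℤ) (ι : Fin N → Fin n) (k : Fin N) :
    Fin n → ℚ :=
  ((List.finRange N).filter (fun l => k < l)).foldl
    (fun v l => sReflDual a (ι l) v) (Pi.single (ι k) 1 : Fin n → ℚ)

/-- Applying the reflections at positions `≥ m` to `v`. -/
def tailU {n N : ℕ} (a : Fin n → Fin n → ℤ) (ι : Fin N → Fin n) (m : ℕ) (v : Fin n → ℚ) :
    Fin n → ℚ :=
  ((List.finRange N).drop m).foldl (fun v l => sReflDual a (ι l) v) v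

theorem filter_finRange_eq_drop {N : ℕ} (k : Fin N) :
    (List.finRange N).filter (fun l => k < l) = (List.finRange N).drop (k.val + 1) := by
  conv_lhs => rw [← List.take_append_drop (k.val + 1) (List.finRange N)]
  rw [List.filter_append, List.filter_eq_nil_iff.2, List.filter_eq_self.2, List.nil_append]
  · intro l hl
    obtain ⟨i, hi, rfl⟩ := List.mem_iff_getElem.1 hl
    simp only [List.getElem_drop, List.getElem_finRange, Fin.lt_def, decide_eq_true_eq, Fin.val_cast]
    omega
  · intro l hl
    obtain ⟨i, hi, rfl⟩ := List.mem_iff_getElem.1 hl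
    simp at hi
    simp [Fin.le_def]
    omega

theorem foldl_refl_lin {n N : ℕ} (a : Fin n → Fin n → ℤ) (ι : Fin N → Fin n) (L : List (Fin N)) :
    ∀ (v w : Fin n → ℚ) (c : ℚ),
      L.foldl (fun v l => sReflDual a (ι l) v) (v - c • w) =
        L.foldl (fun v l => sReflDual a (ι l) v) v
          - c • L.foldl (fun v l => sReflDual a (ι l) v) w := by
  induction L with
  | nil => intros; rfl
  | cons l L ih =>
    intro v w c
    simp only [List.foldl_cons]
    rw [← ih]
    congr 1
    have : ∑ j, (a j (ι l) : ℚ) * (v - c • w) j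
        = ∑ j, (a j (ι l) : ℚ) * v j - c * ∑ j, (a j (ι l) : ℚ) * w j := by
      rw [Finset.mul_sum, ← Finset.sum_sub_distrib]
      refine Finset.sum_congr rfl fun j _ => ?_
      simp; ring
    unfold sReflDual
    rw [this]
    ext j
    simp
    ring

/-- Pairing of the transported simple root with `h`. -/
def eP {n N : ℕ} (a : Fin n → Fin n → ℤ) (ι : Fin N → Fin n) (h : Fin n → ℤ) (i : Fin n)
    (m : ℕ) : ℚ := ∑ t, tailU a ι m (Pi.single i 1) t * (h t : ℚ)

theorem eP_end {n N : ℕ} (a : Fin n → Fin n → ℤ) (ι : Fin N → Fin n) (h : Fin n → ℤ)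
    (i : Fin n) : eP a ι h i N = h i := by
  have : tailU a ι N (Pi.single i 1) = Pi.single i 1 := by
    unfold tailU
    rw [List.drop_eq_nil_of_le (by simp)]
    rfl
  simp [eP, this, Pi.single_apply]

theorem eP_step {n N : ℕ} (a : Fin n → Fin n → ℤ) (ι : Fin N → Fin n) (h : Fin n → ℤ)
    (i : Fin n) (j : Fin N) :
    eP a ι h i j.val = eP a ι h i (j.val + 1) - a i (ι j) * eP a ι h (ι j) (j.val + 1) := by
  have : tailU a ι j.val (Pi.single i 1) = tailU a ι (j.val + 1) (Pi.single i 1)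
      - (a i (ι j) : ℚ) • tailU a ι (j.val + 1) (Pi.single (ι j) 1) := by
    unfold tailU
    rw [List.drop_eq_getElem_cons (by simp), List.foldl_cons, ← foldl_refl_lin]
    congr 1
    simp [sReflDual, Pi.single_apply]
  unfold eP
  rw [this, Finset.mul_sum, ← Finset.sum_sub_distrib]
  refine Finset.sum_congr rfl fun t _ => ?_
  simp; ring

theorem eP_sum {n N : ℕ} (a : Fin n → Fin n → ℤ) (ι : Fin N → Fin n) (h : Fin n → ℤ)
    (i : Fin n) (k : Fin N) (m : ℕ) (hkm : k.val + 1 ≤ m) (hm : m ≤ N) :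
    eP a ι h i (k.val + 1) + ∑ j ∈ Finset.univ.filter (fun j : Fin N => k < j ∧ j.val < m),
      (a i (ι j) : ℚ) * eP a ι h (ι j) (j.val + 1) = eP a ι h i m := by
  induction m, hkm using Nat.le_induction with
  | base =>
    rw [Finset.filter_false_of_mem]
    · simp
    · intro j _
      rw [Fin.lt_def]; omega
  | succ m hkm ih =>
    have hs : Finset.univ.filter (fun j : Fin N => k < j ∧ j.val < m + 1) =
        insert (⟨m, hm⟩ : Fin N) (Finset.univ.filter (fun j : Fin N => k < j ∧ j.val < m)) := by
      ext j
      simp only [Fin.lt_def, Fin.ext_iff, Finset.mem_filter, Finset.mem_univ, true_and,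
        Finset.mem_insert]
      omega
    rw [hs, Finset.sum_insert (by simp)]
    have h1 := ih (by omega)
    have h2 := eP_step a ι h i ⟨m, hm⟩
    simp only at h2 ⊢
    linarith

theorem alphaK_pair {n N : ℕ} (a : Fin n → Fin n → ℤ) (ι : Fin N → Fin n) (h : Fin n → ℤ)
    (k : Fin N) : ∑ i : Fin n, alphaK a ι k i * (h i : ℚ) = eP a ι h (ι k) (k.val + 1) := by
  unfold alphaK eP tailU
  rw [filter_finRange_eq_drop]

/-- The relation between consecutive occurrences. -/
theorem eP_rel {n N : ℕ} (a : Fin n → Fin n → ℤ) (hd : ∀ i, a i i = 2) (ι : Fin N → Fin n)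
    (h : Fin n → ℤ) (k p : Fin N) (hkp : k < p) (hp : ι p = ι k) :
    eP a ι h (ι k) (k.val + 1) + ∑ j ∈ Finset.univ.filter (fun j : Fin N => k < j ∧ j < p),
      (a (ι k) (ι j) : ℚ) * eP a ι h (ι j) (j.val + 1) + eP a ι h (ι p) (p.val + 1) = 0 := by
  have h1 := eP_sum a ι h (ι k) k p.val hkp p.2.le
  have h2 := eP_step a ι h (ι k) p
  rw [hp, hd] at h2
  rw [hp]
  simp only [Fin.lt_def] at h1 ⊢
  push_cast at h2
  linarith

/-- For a reduced word `ι` of the longest Weyl group element,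
`ℋ_ι` consists exactly of the tuples `(∑_i m^{(1)}_i h_i, …, ∑_i m^{(N)}_i h_i)`
with `(h_1,…,h_n) ∈ ℤ^n`, where `m^{(k)}_i` are the coordinates of `α^{(k)}`. -/
theorem Hset_eq_span_of_longest {n N : ℕ} (C : SimpleCartanMatrix n)
    (ι : Fin N → Fin n) (hlong : IsLongestWord C.a (List.ofFn ι)) :
    Hset C.a ι =
      {x : Fin N → ℤ | ∃ h : Fin n → ℤ,
        ∀ k : Fin N, (x k : ℚ) = ∑ i : Fin n, alphaK C.a ι k i * (h i : ℚ)} := by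
  ext x
  simp only [Hset, Set.mem_ofPred_eq, alphaK_pair]
  constructor
  · intro hx
    -- last occurrences determine `h`
    have hex : ∃ h : Fin n → ℤ, ∀ k : Fin N, (¬ ∃ l, k < l ∧ ι l = ι k) →
        h (ι k) = x k + ∑ j ∈ Finset.univ.filter (fun j : Fin N => k < j),
          C.a (ι k) (ι j) * x j := by
      have : ∀ i : Fin n, ∃ c : ℤ, ∀ k : Fin N, ι k = i → (¬ ∃ l, k < l ∧ ι l = ι k) →
          c = x k + ∑ j ∈ Finset.univ.filter (fun j : Fin N => k < j),
            C.a (ι k) (ι j) * x j := by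
        intro i
        by_cases hi : ∃ k : Fin N, ι k = i ∧ ¬ ∃ l, k < l ∧ ι l = ι k
        · obtain ⟨k, rfl, hk⟩ := hi
          refine ⟨x k + ∑ j ∈ Finset.univ.filter (fun j : Fin N => k < j),
              C.a (ι k) (ι j) * x j, fun k' hk' hl => ?_⟩
          · have : k' = k := by
              rcases lt_trichotomy k' k with h | h | h
              · exact absurd ⟨k, h, hk'.symm⟩ hl
              · exact h
              · exact absurd ⟨k', h, hk'⟩ hk
            rw [this]
        · exact ⟨0, fun k hk hl => absurd ⟨k, hk, hl⟩ hi⟩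
      choose h hh using this
      exact ⟨h, fun k hk => hh _ k rfl hk⟩
    obtain ⟨h, hh⟩ := hex
    refine ⟨h, fun k => ?_⟩
    induction k using WellFoundedGT.induction with
    | ind k ih =>
    by_cases hk : ∃ l, k < l ∧ ι l = ι k
    · have hne : (Finset.univ.filter (fun l => k < l ∧ ι l = ι k)).Nonempty := by
        obtain ⟨l, hl⟩ := hk
        exact ⟨l, by simpa using hl⟩
      have hb := hx k hk
      rw [betaFn, dif_pos hne] at hb
      have hmem := Finset.min'_mem _ hne
      set p := (Finset.univ.filter (fun l => k < l ∧ ι l = ι k)).min' hne with hpdef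
      simp only [Finset.mem_filter, Finset.mem_univ, true_and] at hmem
      have hr := eP_rel C.a C.diag ι h k p hmem.1 hmem.2
      have hb' : (x k : ℚ) + (∑ j ∈ Finset.univ.filter (fun j => k < j ∧ j < p),
        (C.a (ι k) (ι j) : ℚ) * x j) + x p = 0 := by exact_mod_cast hb
      rw [ih p hmem.1, Finset.sum_congr rfl (fun j hj => by
        rw [ih j (Finset.mem_filter.1 hj).2.1])] at hb'
      linarith
    · have h1 := eP_sum C.a ι h (ι k) k N k.2 le_rfl
      rw [eP_end] at h1
      have h2 : (h (ι k) : ℚ) = x k + ∑ j ∈ Finset.univ.filter (fun j : Fin N => k < j),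
          (C.a (ι k) (ι j) : ℚ) * x j := by exact_mod_cast hh k hk
      rw [Finset.sum_congr rfl (fun j hj => by
        rw [ih j (Finset.mem_filter.1 hj).2])] at h2
      simp only [Fin.is_lt, and_true] at h1
      linarith
  · rintro ⟨h, hh⟩ k hk
    have hne : (Finset.univ.filter (fun l => k < l ∧ ι l = ι k)).Nonempty := by
      obtain ⟨l, hl⟩ := hk
      exact ⟨l, by simpa using hl⟩
    rw [betaFn, dif_pos hne]
    have hmem := Finset.min'_mem _ hne
    set p := (Finset.univ.filter (fun l => k < l ∧ ι l = ι k)).min' hne with hpdef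
    simp only [Finset.mem_filter, Finset.mem_univ, true_and] at hmem
    have hr := eP_rel C.a C.diag ι h k p hmem.1 hmem.2
    simp only [← hh] at hr
    exact_mod_cast hr
end

section
/- Let ι = (i_1,…,i_N) be a reduced word for the longest element of the Weyl group of A, and let Ξ be a finite set of linear forms on ℤ^N, each of the form φ(x) = x_{k_φ} − ∑_{j : j^{(+)} ≤ N} c^{(φ)}_j β_j(x) for some index 1 ≤ k_φ ≤ N and integers c^{(φ)}_j. Set B_Ξ = {x ∈ ℤ^N : φ(x) ≥ 0 for all φ ∈ Ξ}. Assume (1) there exists x̃ ∈ ℤ^N with φ(x̃) ≥ 1 for all φ ∈ Ξ, and (2) the restricted graph on B_Ξ — with an edge between x and f̃_i(x) whenever both lie in B_Ξ, for every index i — is connected. Then the crystal graph of the cellular crystal B_ι on all of ℤ^N is connected. -/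
/-- The linear form `φ(x) = x_{k_φ} - ∑_{j : j⁺ ≤ N} c_j β_j(x)` attached to the
data `(k_φ, c)`. -/
def xiForm {n N : ℕ} (a : Fin n → Fin n → ℤ) (ι : Fin N → Fin n)
    (kphi : Fin N) (c : Fin N → ℤ) (x : Fin N → ℤ) : ℤ :=
  x kphi - ∑ j ∈ Finset.univ.filter (fun j => ∃ l, j < l ∧ ι l = ι j),
    c j * betaFn a ι j x


open Finset

namespace CellAux

/-- the row form `r_i(v) = ∑ a_ij v_j` -/
def rL {n : ℕ} (a : Fin n → Fin n → ℤ) (i : Fin n) : (Fin n → ℚ) →ₗ[ℚ] ℚ :=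
  ∑ j, (a i j : ℚ) • LinearMap.proj j

lemma rL_apply {n : ℕ} (a : Fin n → Fin n → ℤ) (i : Fin n) (v : Fin n → ℚ) :
    rL a i v = ∑ j, (a i j : ℚ) * v j := by
  simp [rL]

abbrev ee {n : ℕ} (i : Fin n) : Fin n → ℚ := Pi.single i 1

def sL {n : ℕ} (a : Fin n → Fin n → ℤ) (i : Fin n) : (Fin n → ℚ) →ₗ[ℚ] (Fin n → ℚ) :=
  LinearMap.id - (rL a i).smulRight (ee i)

lemma sL_apply {n : ℕ} (a : Fin n → Fin n → ℤ) (i : Fin n) (v : Fin n → ℚ) :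
    sL a i v = v - rL a i v • ee i := by
  simp [sL]

lemma sL_eq {n : ℕ} (a : Fin n → Fin n → ℤ) (i : Fin n) : ⇑(sL a i) = sRefl a i := by
  funext v
  rw [sL_apply, rL_apply]; rfl

def wL {n : ℕ} (a : Fin n → Fin n → ℤ) : List (Fin n) → ((Fin n → ℚ) →ₗ[ℚ] (Fin n → ℚ))
  | [] => LinearMap.id
  | i :: l => sL a i ∘ₗ wL a l

lemma wL_eq {n : ℕ} (a : Fin n → Fin n → ℤ) (l : List (Fin n)) : ⇑(wL a l) = wProd a l := by
  induction l with
  | nil => rfl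
  | cons i l ih =>
    have : wProd a (i :: l) = sRefl a i ∘ wProd a l := rfl
    rw [this, ← ih, ← sL_eq]; rfl

lemma wL_append {n : ℕ} (a : Fin n → Fin n → ℤ) (l l' : List (Fin n)) :
    wL a (l ++ l') = wL a l ∘ₗ wL a l' := by
  induction l with
  | nil => rfl
  | cons i l ih => simp only [List.cons_append, wL, ih, LinearMap.comp_assoc]

lemma rL_ee {n : ℕ} (a : Fin n → Fin n → ℤ) (i j : Fin n) : rL a i (ee j) = a i j := by
  simp [rL_apply, Pi.single_apply]

lemma sL_sL {n : ℕ} (C : SimpleCartanMatrix n) (i : Fin n) (v : Fin n → ℚ) :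
    sL C.a i (sL C.a i v) = v := by
  simp only [sL_apply, map_sub, map_smul, rL_ee, C.diag]
  ext t
  simp
  ring

/-- Invariant positive definite form. -/
structure InvForm {n : ℕ} (a : Fin n → Fin n → ℤ) where
  B : (Fin n → ℚ) →ₗ[ℚ] (Fin n → ℚ) →ₗ[ℚ] ℚ
  symm : ∀ v w, B v w = B w v
  pos : ∀ v, v ≠ 0 → 0 < B v v
  inv : ∀ k v w, B (sL a k v) (sL a k w) = B v w

lemma exists_invForm {n : ℕ} (C : SimpleCartanMatrix n) : Nonempty (InvForm C.a) := by
  have hfin : Set.Finite {w : (Fin n → ℚ) →ₗ[ℚ] (Fin n → ℚ) | ∃ l, w = wL C.a l} := by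
    apply Set.Finite.of_finite_image (f := fun w : (Fin n → ℚ) →ₗ[ℚ] (Fin n → ℚ) => (⇑w : (Fin n → ℚ) → (Fin n → ℚ)))
    · apply C.finiteWeyl.subset
      rintro _ ⟨w, ⟨l, rfl⟩, rfl⟩
      exact ⟨l, wL_eq _ _⟩
    · exact DFunLike.coe_injective.injOn
  set S := hfin.toFinset with hS
  have hmem : ∀ w, w ∈ S ↔ ∃ l, w = wL C.a l := by intro w; simp [hS]
  refine ⟨⟨LinearMap.mk₂ ℚ (fun v w => ∑ g ∈ S, ∑ t, g v t * g w t) ?_ ?_ ?_ ?_, ?_, ?_, ?_⟩⟩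
  · intro v v' w
    simp only [map_add, Pi.add_apply, add_mul, Finset.sum_add_distrib]
  · intro c v w
    simp only [map_smul, Pi.smul_apply, smul_eq_mul, Finset.mul_sum, mul_assoc]
  · intro v w w'
    simp only [map_add, Pi.add_apply, mul_add, Finset.sum_add_distrib]
  · intro c v w
    simp only [map_smul, Pi.smul_apply, smul_eq_mul, Finset.mul_sum, mul_left_comm]
  · intro v w
    simp only [LinearMap.mk₂_apply]
    simp only [mul_comm]
  · intro v hv
    simp only [LinearMap.mk₂_apply]
    apply Finset.sum_pos'
    · intro g _
      exact Finset.sum_nonneg fun t _ => mul_self_nonneg _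
    · refine ⟨LinearMap.id, (hmem _).2 ⟨[], rfl⟩, ?_⟩
      obtain ⟨t, ht⟩ := Function.ne_iff.1 hv
      apply Finset.sum_pos'
      · intro t _
        exact mul_self_nonneg _
      · exact ⟨t, Finset.mem_univ _, mul_self_pos.2 ht⟩
  · intro k v w
    simp only [LinearMap.mk₂_apply]
    have hm : ∀ g ∈ S, g ∘ₗ sL C.a k ∈ S := by
      intro g hg
      obtain ⟨l, rfl⟩ := (hmem g).1 hg
      exact (hmem _).2 ⟨l ++ [k], by rw [wL_append]; rfl⟩
    have hi : ∀ g ∈ S, (g ∘ₗ sL C.a k) ∘ₗ sL C.a k = g := by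
      intro g _
      ext1
      ext
      simp [sL_sL]
    exact Finset.sum_nbij' (fun g => g ∘ₗ sL C.a k) (fun g => g ∘ₗ sL C.a k) hm hm hi hi
      (fun g _ => rfl)

section
variable {n : ℕ} (C : SimpleCartanMatrix n) (I : InvForm C.a)

lemma dpos (k : Fin n) : 0 < I.B (ee k) (ee k) := by
  apply I.pos
  intro h
  have := congrFun h k
  simp at this

lemma two_B (k : Fin n) (v : Fin n → ℚ) : 2 * I.B v (ee k) = rL C.a k v * I.B (ee k) (ee k) := by
  have h := I.inv k v (ee k)
  simp only [sL_apply, rL_ee, C.diag, map_sub, map_smul, LinearMap.sub_apply,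
    LinearMap.smul_apply, smul_eq_mul] at h
  push_cast at h
  linarith

lemma two_B_ee (k i : Fin n) :
    2 * I.B (ee i) (ee k) = C.a k i * I.B (ee k) (ee k) := by
  rw [two_B, rL_ee]

lemma B_sum (v w : Fin n → ℚ) : I.B v w = ∑ k, w k * I.B v (ee k) := by
  have hw : w = ∑ k, w k • ee k := by
    ext t
    simp [Finset.sum_apply, Pi.single_apply]
  conv_lhs => rw [hw]
  simp only [map_sum, map_smul, smul_eq_mul]

lemma B_sum2 (v w : Fin n → ℚ) :
    2 * I.B v w = ∑ k, ∑ i, I.B (ee k) (ee k) * w k * C.a k i * v i := by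
  rw [B_sum, Finset.mul_sum]
  refine Finset.sum_congr rfl fun k _ => ?_
  rw [mul_left_comm, two_B, rL_apply, Finset.sum_mul, Finset.mul_sum]
  exact Finset.sum_congr rfl fun i _ => by ring

lemma B_wL (l : List (Fin n)) (v w : Fin n → ℚ) : I.B (wL C.a l v) (wL C.a l w) = I.B v w := by
  induction l with
  | nil => rfl
  | cons i l ih => exact (I.inv i _ _).trans ih

lemma wL_rev (l : List (Fin n)) (v : Fin n → ℚ) : wL C.a l (wL C.a l.reverse v) = v := by
  induction l generalizing v with
  | nil => rfl
  | cons i l ih =>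
    rw [List.reverse_cons, wL_append]
    change sL C.a i (wL C.a l (wL C.a l.reverse (sL C.a i v))) = v
    rw [ih, sL_sL]

lemma even_sum (M : Fin n → Fin n → ℤ) (hs : ∀ i j, M i j = M j i) (hd : ∀ i, Even (M i i)) :
    Even (∑ i, ∑ j, M i j) := by
  rw [← ZMod.intCast_eq_zero_iff_even, ← Finset.sum_product', Int.cast_sum]
  refine Finset.sum_involution (fun p _ => (p.2, p.1)) ?_ ?_ ?_ ?_
  · rintro ⟨i, j⟩ _
    simp only [hs j i]
    exact CharTwo.add_self_eq_zero _
  · rintro ⟨i, j⟩ _ h h'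
    apply h
    simp only [Prod.mk.injEq] at h'
    obtain ⟨rfl, _⟩ := h'
    exact (ZMod.intCast_eq_zero_iff_even).2 (hd _)
  · simp
  · simp

lemma norm_ge (D : ℚ) (hD : 0 < D) (p : Fin n → ℚ) (hp : p ≠ 0)
    (m z : Fin n → ℤ) (hm : ∀ k, p k = m k) (hz : ∀ k, I.B (ee k) (ee k) * p k = D * z k) :
    D ≤ I.B p p := by
  have hsum : 2 * I.B p p = D * ((∑ k, ∑ i, z k * C.a k i * m i : ℤ) : ℚ) := by
    rw [B_sum2]
    push_cast
    rw [Finset.mul_sum]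
    refine Finset.sum_congr rfl fun k _ => ?_
    rw [Finset.mul_sum]
    refine Finset.sum_congr rfl fun i _ => ?_
    rw [hz, hm]; ring
  have hev : Even (∑ k, ∑ i, z k * C.a k i * m i : ℤ) := by
    apply even_sum
    · intro i j
      have h1 := two_B_ee C I i j
      have h2 := two_B_ee C I j i
      rw [I.symm] at h2
      have h3 : (C.a i j : ℚ) * I.B (ee i) (ee i) = C.a j i * I.B (ee j) (ee j) := by linarith
      have : D * (z i * C.a i j * m j : ℚ) = D * (z j * C.a j i * m i) := by
        calc D * (z i * C.a i j * m j : ℚ) = (D * z i) * C.a i j * m j := by ring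
          _ = p i * p j * (C.a i j * I.B (ee i) (ee i)) := by rw [← hz, hm j]; ring
          _ = (D * z j) * C.a j i * m i := by rw [← hz, h3, hm i]; ring
          _ = _ := by ring
      exact_mod_cast mul_left_cancel₀ hD.ne' this
    · intro i
      rw [C.diag]
      exact ⟨z i * m i, by ring⟩
  obtain ⟨r, hr⟩ := hev
  rw [hr] at hsum
  have hpos := I.pos p hp
  push_cast at hsum
  have h4 : I.B p p = D * r := by linarith
  rw [h4] at hpos ⊢
  have h5 : (0 : ℚ) < r := pos_of_mul_pos_right hpos hD.le
  have h6 : (1 : ℚ) ≤ r := by exact_mod_cast (by exact_mod_cast h5 : (0 : ℤ) < r)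
  nlinarith

lemma root_int (l : List (Fin n)) (j k : Fin n) : ∃ m : ℤ, wL C.a l (ee j) k = m := by
  induction l generalizing k with
  | nil => exact ⟨(Pi.single j 1 : Fin n → ℤ) k, by
      simp only [wL, LinearMap.id_apply, Pi.single_apply]; split_ifs <;> simp⟩
  | cons i l ih =>
    choose m hm using ih
    refine ⟨m k - (∑ t, C.a i t * m t) * (Pi.single i 1 : Fin n → ℤ) k, ?_⟩
    change sL C.a i (wL C.a l (ee j)) k = _
    rw [sL_apply, rL_apply]
    simp only [Pi.sub_apply, Pi.smul_apply, hm, Pi.single_apply, smul_eq_mul]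
    push_cast
    split_ifs <;> simp

lemma root_coint (l : List (Fin n)) (j k : Fin n) :
    ∃ z : ℤ, I.B (ee k) (ee k) * wL C.a l (ee j) k = I.B (ee j) (ee j) * z := by
  induction l generalizing k with
  | nil =>
    by_cases h : k = j
    · subst h; exact ⟨1, by simp [wL]⟩
    · exact ⟨0, by simp [wL, Pi.single_apply, h]⟩
  | cons i l ih =>
    choose z hz using ih
    by_cases h : k = i
    · subst h
      refine ⟨z k - ∑ t, C.a t k * z t, ?_⟩
      change _ * sL C.a k (wL C.a l (ee j)) k = _
      rw [sL_apply, rL_apply]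
      simp only [Pi.sub_apply, Pi.smul_apply, Pi.single_eq_same, smul_eq_mul, mul_one, mul_sub, hz]
      push_cast
      rw [mul_sub]
      congr 1
      rw [Finset.mul_sum, Finset.mul_sum]
      refine Finset.sum_congr rfl fun t _ => ?_
      have h1 := two_B_ee C I t k
      have h2 := two_B_ee C I k t
      rw [I.symm] at h2
      have h3 : (C.a t k : ℚ) * I.B (ee t) (ee t) = C.a k t * I.B (ee k) (ee k) := by linarith
      calc _ = (C.a k t * I.B (ee k) (ee k)) * wL C.a l (ee j) t := by ring
        _ = C.a t k * (I.B (ee t) (ee t) * wL C.a l (ee j) t) := by rw [← h3]; ring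
        _ = _ := by rw [hz]; ring
    · refine ⟨z k, ?_⟩
      change _ * sL C.a i (wL C.a l (ee j)) k = _
      rw [sL_apply]
      simp [Pi.single_apply, h, hz]

lemma root_sign (I : InvForm C.a) (l : List (Fin n)) (j : Fin n) :
    (∀ k, 0 ≤ wL C.a l (ee j) k) ∨ (∀ k, wL C.a l (ee j) k ≤ 0) := by
  by_contra hcon
  push Not at hcon
  obtain ⟨⟨k₁, hk₁⟩, k₂, hk₂⟩ := hcon
  set β := wL C.a l (ee j) with hβ
  choose m hm using root_int C l j
  choose z hz using root_coint C I l j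
  rw [← hβ] at hm hz
  set p : Fin n → ℚ := fun k => if 0 ≤ β k then β k else 0 with hp
  set q : Fin n → ℚ := fun k => if 0 ≤ β k then 0 else - β k with hq
  have hpq : β = p - q := by
    ext k; simp only [hp, hq, Pi.sub_apply]; split_ifs <;> simp
  have hD := dpos C I j
  have h1 : I.B (ee j) (ee j) ≤ I.B p p := by
    refine norm_ge C I _ hD p ?_ (fun k => if 0 ≤ β k then m k else 0)
      (fun k => if 0 ≤ β k then z k else 0) ?_ ?_
    · intro h
      have := congrFun h k₂
      simp only [hp, hk₂.le, if_true, Pi.zero_apply] at this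
      linarith
    · intro k; simp only [hp]; split_ifs <;> simp [hm]
    · intro k; simp only [hp]; split_ifs <;> simp [hz]
  have h2 : I.B (ee j) (ee j) ≤ I.B q q := by
    refine norm_ge C I _ hD q ?_ (fun k => if 0 ≤ β k then 0 else - m k)
      (fun k => if 0 ≤ β k then 0 else - z k) ?_ ?_
    · intro h
      have := congrFun h k₁
      simp only [hq, not_le.2 hk₁, if_false, Pi.zero_apply] at this
      linarith
    · intro k; simp only [hq]; split_ifs <;> simp [hm]
    · intro k; simp only [hq]; split_ifs <;> simp [hz]
  have h3 : 2 * I.B p q ≤ 0 := by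
    rw [B_sum2]
    refine Finset.sum_nonpos fun k _ => Finset.sum_nonpos fun i _ => ?_
    have hd := (dpos C I k).le
    have hq0 : 0 ≤ q k := by
      simp only [hq]; split_ifs with h
      · exact le_rfl
      · linarith
    have hp0 : 0 ≤ p i := by
      simp only [hp]; split_ifs with h
      · exact h
      · exact le_rfl
    by_cases hki : k = i
    · subst hki
      have : q k * p k = 0 := by simp only [hp, hq]; split_ifs <;> simp
      apply le_of_eq
      calc _ = I.B (ee k) (ee k) * C.a k k * (q k * p k) := by ring
        _ = 0 := by rw [this, mul_zero]
    · have ha : (C.a k i : ℚ) ≤ 0 := by exact_mod_cast C.offdiag_nonpos k i hki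
      exact mul_nonpos_of_nonpos_of_nonneg
        (mul_nonpos_of_nonneg_of_nonpos (mul_nonneg hd hq0) ha) hp0
  have h4 : I.B β β = I.B (ee j) (ee j) := B_wL C I l _ _
  rw [hpq] at h4
  simp only [map_sub, LinearMap.sub_apply] at h4
  rw [I.symm q p] at h4
  linarith

lemma exchange (I : InvForm C.a) (l : List (Fin n)) (i : Fin n) (h : ¬ ∀ k, 0 ≤ wL C.a l (ee i) k) :
    ∃ l' : List (Fin n), l'.length < (l ++ [i]).length ∧ wL C.a l' = wL C.a (l ++ [i]) := by
  induction l with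
  | nil =>
    exfalso; apply h; intro k
    simp only [wL, LinearMap.id_apply, Pi.single_apply]; split_ifs <;> simp
  | cons j l ih =>
    by_cases hl : ∀ k, 0 ≤ wL C.a l (ee i) k
    · have hneg : ∀ k, wL C.a (j :: l) (ee i) k ≤ 0 := (root_sign C I _ _).resolve_left h
      set β := wL C.a l (ee i) with hβ
      have hne : ∀ k, k ≠ j → β k = 0 := by
        intro k hk
        have h1 := hneg k
        change sL C.a j β k ≤ 0 at h1
        rw [sL_apply] at h1
        simp [Pi.single_apply, hk] at h1
        exact le_antisymm h1 (hl k)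
      have hc : β = β j • ee j := by
        ext k
        by_cases hk : k = j
        · subst hk; simp
        · simp [hk, hne k hk]
      have hd := dpos C I j
      have hnorm : I.B (ee i) (ee i) = β j * β j * I.B (ee j) (ee j) := by
        rw [← B_wL C I l, ← hβ]
        conv_lhs => rw [hc]
        simp only [map_smul, LinearMap.smul_apply, smul_eq_mul]; ring
      have hcj : β j ≠ 0 := by
        intro h0
        have := dpos C I i
        rw [hnorm, h0] at this
        simp at this
      have hcomm : wL C.a l ∘ₗ sL C.a i = sL C.a j ∘ₗ wL C.a l := by
        apply LinearMap.ext
        intro v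
        simp only [LinearMap.comp_apply, sL_apply, map_sub, map_smul, ← hβ]
        congr 1
        have hr : rL C.a j (wL C.a l v) = rL C.a i v * β j := by
          have e1 := two_B C I j (wL C.a l v)
          have e2 := two_B C I i v
          rw [← B_wL C I l, ← hβ, hc, map_smul, smul_eq_mul, hnorm] at e2
          have : β j * I.B (ee j) (ee j) * rL C.a j (wL C.a l v)
              = β j * I.B (ee j) (ee j) * (rL C.a i v * β j) := by
            linear_combination e2 - β j * e1
          exact mul_left_cancel₀ (mul_ne_zero hcj hd.ne') this
        rw [hr, mul_smul]
        conv_lhs => rw [hc]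
      refine ⟨l, by simp, ?_⟩
      apply LinearMap.ext
      intro v
      change _ = sL C.a j (wL C.a (l ++ [i]) v)
      rw [wL_append]
      have := LinearMap.congr_fun hcomm v
      change _ = sL C.a j ((wL C.a l ∘ₗ sL C.a i) v)
      rw [hcomm]
      simp [sL_sL]
    · obtain ⟨l', h1, h2⟩ := ih hl
      refine ⟨j :: l', by simpa using h1, ?_⟩
      simp only [List.cons_append, wL, h2]

lemma reduced_pos (I : InvForm C.a) (l r : List (Fin n)) (i : Fin n) (hred : IsReducedList C.a (l ++ i :: r)) :
    ∀ k, 0 ≤ wL C.a l (ee i) k := by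
  by_contra h
  obtain ⟨l', h1, h2⟩ := exchange C I l i h
  have := hred (l' ++ r) (by
    rw [← wL_eq, ← wL_eq, wL_append, h2, ← wL_append]; simp)
  simp at this h1
  omega

/-- `rL` of the inverse translate of a dominant regular vector is positive. -/
lemma pairing_pos (I : InvForm C.a) (l r : List (Fin n)) (i : Fin n) (hred : IsReducedList C.a (l ++ i :: r))
    (v : Fin n → ℚ) (hv : ∀ k, 0 < rL C.a k v) : 0 < rL C.a i (wL C.a l.reverse v) := by
  have hpos := reduced_pos C I l r i hred
  have e := two_B C I i (wL C.a l.reverse v)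
  rw [← B_wL C I l, wL_rev, B_sum] at e
  have hd := dpos C I i
  have : 0 < ∑ k, wL C.a l (ee i) k * I.B v (ee k) := by
    have hB : ∀ k, 0 < I.B v (ee k) := by
      intro k
      have := two_B C I k v
      have := mul_pos (hv k) (dpos C I k)
      linarith
    have hne : wL C.a l (ee i) ≠ 0 := by
      intro h0
      have := B_wL C I l (ee i) (ee i)
      rw [h0] at this
      simp at this
      exact hd.ne this
    obtain ⟨t, ht⟩ := Function.ne_iff.1 hne
    exact Finset.sum_pos' (fun k _ => mul_nonneg (hpos k) (hB k).le)
      ⟨t, Finset.mem_univ _, mul_pos (lt_of_le_of_ne (hpos t) (Ne.symm ht)) (hB t)⟩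
  have h2 : 0 < rL C.a i (wL C.a l.reverse v) * I.B (ee i) (ee i) := by linarith
  exact pos_of_mul_pos_left h2 hd.le

lemma exists_dominant (I : InvForm C.a) : ∃ v : Fin n → ℤ, ∀ k, 0 < ∑ j, C.a k j * v j := by
  have hdet : Matrix.det (Matrix.of C.a) ≠ 0 := by
    intro h0
    obtain ⟨v, hv, h⟩ := Matrix.exists_mulVec_eq_zero_iff.2 h0
    have hv' : (fun k => (v k : ℚ)) ≠ 0 := by
      intro h'
      apply hv
      ext k
      have := congrFun h' k
      simpa using this
    have hp := I.pos _ hv'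
    have hr : ∀ k, rL C.a k (fun k => (v k : ℚ)) = 0 := by
      intro k
      have := congrFun h k
      simp only [Matrix.mulVec, dotProduct, Matrix.of_apply, Pi.zero_apply] at this
      rw [rL_apply]
      exact_mod_cast this
    have : ∀ k, I.B (fun k => (v k : ℚ)) (ee k) = 0 := by
      intro k
      have := two_B C I k (fun k => (v k : ℚ))
      rw [hr] at this
      linarith
    rw [B_sum] at hp
    simp [this] at hp
  set A := Matrix.of C.a
  refine ⟨A.det • (A.adjugate.mulVec 1), fun k => ?_⟩
  have h1 : A.mulVec (A.det • (A.adjugate.mulVec 1)) = (A.det * A.det) • 1 := by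
    rw [Matrix.mulVec_smul, Matrix.mulVec_mulVec, Matrix.mul_adjugate, Matrix.smul_mulVec,
      Matrix.one_mulVec, smul_smul]
  have h2 := congrFun h1 k
  change ∑ j, C.a k j * _ = _ at h2
  rw [h2]
  simpa using mul_self_pos.2 hdet

end

section
variable {n N : ℕ}

def sZ (a : Fin n → Fin n → ℤ) (i : Fin n) (v : Fin n → ℤ) : Fin n → ℤ :=
  v - (∑ j, a i j * v j) • (Pi.single i 1 : Fin n → ℤ)

def uu (a : Fin n → Fin n → ℤ) (ι : Fin N → Fin n) (v : Fin n → ℤ) : ℕ → Fin n → ℤ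
  | 0 => v
  | k + 1 => if h : k < N then sZ a (ι ⟨k, h⟩) (uu a ι v k) else uu a ι v k

def hh (a : Fin n → Fin n → ℤ) (ι : Fin N → Fin n) (v : Fin n → ℤ) (m : Fin N) : ℤ :=
  ∑ j, a (ι m) j * uu a ι v m j

lemma uu_cast (a : Fin n → Fin n → ℤ) (ι : Fin N → Fin n) (v : Fin n → ℤ) (k : ℕ) (hk : k ≤ N) :
    (fun t => (uu a ι v k t : ℚ)) = wL a ((List.ofFn ι).take k).reverse (fun t => (v t : ℚ)) := by
  induction k with
  | zero => rfl
  | succ k ih =>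
    have hk' : k < N := hk
    have : (List.ofFn ι).take (k+1) = (List.ofFn ι).take k ++ [ι ⟨k, hk'⟩] := by
      rw [List.take_succ_eq_append_getElem (by simpa using hk')]
      simp
    rw [this, List.reverse_append]
    change _ = sL a _ (wL a ((List.ofFn ι).take k).reverse _)
    rw [← ih hk'.le, sL_apply, rL_apply]
    ext t
    simp only [uu, hk', dif_pos, sZ, Pi.sub_apply, Pi.smul_apply, smul_eq_mul, Pi.single_apply]
    push_cast
    split_ifs <;> simp

lemma hh_pos (C : SimpleCartanMatrix n) (ι : Fin N → Fin n)
    (hred : IsReducedList C.a (List.ofFn ι)) (v : Fin n → ℤ)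
    (hv : ∀ k, 0 < ∑ j, C.a k j * v j) (m : Fin N) : 0 < hh C.a ι v m := by
  obtain ⟨I⟩ := exists_invForm C
  have hsplit : List.ofFn ι = (List.ofFn ι).take m ++ ι m :: (List.ofFn ι).drop (m + 1) := by
    conv_lhs => rw [← List.take_append_drop m (List.ofFn ι)]
    rw [List.drop_eq_getElem_cons (by simp)]
    simp
  rw [hsplit] at hred
  have := pairing_pos C I _ _ _ hred (fun t => (v t : ℚ)) (by
    intro k
    rw [rL_apply]
    exact_mod_cast hv k)
  rw [← uu_cast C.a ι v m m.2.le, rL_apply] at this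
  unfold hh
  exact_mod_cast this

lemma uu_sum (a : Fin n → Fin n → ℤ) (ι : Fin N → Fin n) (v : Fin n → ℤ) (k : ℕ) (hk : k ≤ N)
    (t : Fin n) :
    uu a ι v k t = v t - ∑ ν ∈ univ.filter (fun ν : Fin N => (ν : ℕ) < k),
      hh a ι v ν * (Pi.single (ι ν) 1 : Fin n → ℤ) t := by
  induction k with
  | zero => simp [uu]
  | succ k ih =>
    have hk' : k < N := hk
    have hf : univ.filter (fun ν : Fin N => (ν : ℕ) < k + 1)
        = insert ⟨k, hk'⟩ (univ.filter (fun ν : Fin N => (ν : ℕ) < k)) := by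
      ext ν
      simp [Fin.ext_iff]
      omega
    rw [hf, Finset.sum_insert (by simp)]
    simp only [uu, hk', dif_pos, sZ, Pi.sub_apply, Pi.smul_apply, smul_eq_mul]
    rw [ih hk'.le]
    simp only [hh]
    ring

lemma cellA_hh (a : Fin n → Fin n → ℤ) (ι : Fin N → Fin n) (v : Fin n → ℤ) (m : Fin N) :
    cellA a ι (ι m) (hh a ι v) m = - ∑ j, a (ι m) j * v j := by
  have h : hh a ι v m = ∑ j, a (ι m) j * v j
      - ∑ ν ∈ univ.filter (fun ν => ν < m), a (ι m) (ι ν) * hh a ι v ν := by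
    conv_lhs => unfold hh
    simp only [uu_sum a ι v m m.2.le, mul_sub, Finset.sum_sub_distrib, Finset.mul_sum]
    congr 1
    rw [Finset.sum_comm]
    refine Finset.sum_congr rfl fun ν _ => ?_
    simp [Pi.single_apply]
  unfold cellA
  rw [h]; ring

/-- the property of being a translation symmetry -/
def Good (a : Fin n → Fin n → ℤ) (ι : Fin N → Fin n) (h : Fin N → ℤ) : Prop :=
  ∀ m m', ι m = ι m' → cellA a ι (ι m) h m = cellA a ι (ι m) h m'

lemma cellA_add (a : Fin n → Fin n → ℤ) (ι : Fin N → Fin n) (i : Fin n) (x y : Fin N → ℤ)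
    (m : Fin N) : cellA a ι i (x + y) m = cellA a ι i x m + cellA a ι i y m := by
  simp only [cellA, Pi.add_apply, mul_add, Finset.sum_add_distrib]; ring

lemma cellA_smul (a : Fin n → Fin n → ℤ) (ι : Fin N → Fin n) (i : Fin n) (c : ℤ) (x : Fin N → ℤ)
    (m : Fin N) : cellA a ι i (c • x) m = c * cellA a ι i x m := by
  simp only [cellA, Pi.smul_apply, smul_eq_mul, mul_sub, Finset.mul_sum, mul_left_comm]; ring

lemma Good.smul {a : Fin n → Fin n → ℤ} {ι : Fin N → Fin n} {h : Fin N → ℤ} (hg : Good a ι h)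
    (c : ℤ) : Good a ι (c • h) := by
  intro m m' hm
  rw [cellA_smul, cellA_smul, hg m m' hm]

lemma good_hh (a : Fin n → Fin n → ℤ) (ι : Fin N → Fin n) (v : Fin n → ℤ) :
    Good a ι (hh a ι v) := by
  intro m m' hm
  rw [cellA_hh, hm, cellA_hh]

lemma argmin_add {a : Fin n → Fin n → ℤ} {ι : Fin N → Fin n} {h : Fin N → ℤ} (hg : Good a ι h)
    (i : Fin n) (x : Fin N → ℤ) : argminSet a ι i (x + h) = argminSet a ι i x := by
  ext m
  simp only [argminSet, mem_filter, mem_univ, true_and, cellA_add]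
  refine and_congr_right fun hm => forall_congr' fun m' => forall_congr' fun hm' => ?_
  have := hg m m' (hm.trans hm'.symm)
  rw [hm] at this
  rw [this]
  exact add_le_add_iff_right _

lemma kashF_add {a : Fin n → Fin n → ℤ} {ι : Fin N → Fin n} {h : Fin N → ℤ} (hg : Good a ι h)
    (i : Fin n) (x : Fin N → ℤ) : kashF a ι i (x + h) = kashF a ι i x + h := by
  unfold kashF
  simp only [argmin_add hg]
  split_ifs with hne
  · ext t
    simp only [Function.update_apply, Pi.add_apply]
    split_ifs with ht
    · rw [ht]; ring
    · rfl
  · rfl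

lemma beta_add (a : Fin n → Fin n → ℤ) (ι : Fin N → Fin n) (k : Fin N) (x y : Fin N → ℤ) :
    betaFn a ι k (x + y) = betaFn a ι k x + betaFn a ι k y := by
  unfold betaFn
  split_ifs
  · simp only [Pi.add_apply, mul_add, Finset.sum_add_distrib]; ring
  · rfl

lemma beta_good {a : Fin n → Fin n → ℤ} (hd : ∀ i, a i i = 2) {ι : Fin N → Fin n}
    {h : Fin N → ℤ} (hg : Good a ι h) (k : Fin N) : betaFn a ι k h = 0 := by
  unfold betaFn
  split_ifs with hne
  · set l := (univ.filter (fun l => k < l ∧ ι l = ι k)).min' hne with hl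
    have hmem := Finset.min'_mem _ hne
    rw [← hl] at hmem
    simp only [mem_filter, mem_univ, true_and] at hmem
    have h1 := hg k l hmem.2.symm
    have hf : univ.filter (fun ν => ν < l)
        = univ.filter (fun ν => ν < k) ∪ insert k (univ.filter (fun j => k < j ∧ j < l)) := by
      ext ν
      have := hmem.1
      simp only [mem_filter, mem_univ, true_and, mem_union, mem_insert, Fin.ext_iff, Fin.lt_def] at *
      omega
    have hdisj : Disjoint (univ.filter (fun ν => ν < k))
        (insert k (univ.filter (fun j => k < j ∧ j < l))) := by
      rw [Finset.disjoint_left]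
      intro ν
      simp only [mem_filter, mem_univ, true_and, mem_insert, Fin.ext_iff, Fin.lt_def]
      omega
    unfold cellA at h1
    rw [hf, Finset.sum_union hdisj, Finset.sum_insert (by simp), hd] at h1
    linarith
  · rfl

lemma xi_add {a : Fin n → Fin n → ℤ} (hd : ∀ i, a i i = 2) {ι : Fin N → Fin n}
    {h : Fin N → ℤ} (hg : Good a ι h) (k : Fin N) (c : Fin N → ℤ) (x : Fin N → ℤ) :
    xiForm a ι k c (x + h) = xiForm a ι k c x + h k := by
  simp only [xiForm, beta_add, beta_good hd hg, add_zero, Pi.add_apply]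
  ring

end

end CellAux

/-- If `B_Ξ` admits `x̃` with all `φ(x̃) ≥ 1` and the restricted
crystal graph on `B_Ξ` is connected, then the crystal graph of the cellular
crystal `B_ι` on all of `ℤ^N` is connected. -/
theorem cellular_connected_of_BXi_connected {n N : ℕ} (C : SimpleCartanMatrix n)
    (ι : Fin N → Fin n) (hlong : IsLongestWord C.a (List.ofFn ι))
    {F : Type*} [Fintype F] (kphi : F → Fin N) (c : F → Fin N → ℤ)
    (hxt : ∃ xt : Fin N → ℤ, ∀ f : F, 1 ≤ xiForm C.a ι (kphi f) (c f) xt)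
    (hconn : ∀ x ∈ {x : Fin N → ℤ | ∀ f : F, 0 ≤ xiForm C.a ι (kphi f) (c f) x},
      ∀ y ∈ {x : Fin N → ℤ | ∀ f : F, 0 ≤ xiForm C.a ι (kphi f) (c f) x},
        Relation.ReflTransGen
          (fun u v =>
            u ∈ {x : Fin N → ℤ | ∀ f : F, 0 ≤ xiForm C.a ι (kphi f) (c f) x} ∧
            v ∈ {x : Fin N → ℤ | ∀ f : F, 0 ≤ xiForm C.a ι (kphi f) (c f) x} ∧
            ∃ i : Fin n, kashF C.a ι i u = v ∨ kashF C.a ι i v = u)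
          x y) :
    ∀ x y : Fin N → ℤ, Relation.ReflTransGen (cellEdge C.a ι) x y := by
  obtain ⟨I⟩ := CellAux.exists_invForm C
  obtain ⟨v, hv⟩ := CellAux.exists_dominant C I
  have hpos := CellAux.hh_pos C ι hlong.1 v hv
  have hgood := CellAux.good_hh C.a ι v
  intro x y
  set M : ℤ := ∑ f, (|xiForm C.a ι (kphi f) (c f) x| + |xiForm C.a ι (kphi f) (c f) y|) with hM
  set h := M • CellAux.hh C.a ι v with hh
  have hg : CellAux.Good C.a ι h := hgood.smul M
  have hbound : ∀ f, |xiForm C.a ι (kphi f) (c f) x| + |xiForm C.a ι (kphi f) (c f) y|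
      ≤ h (kphi f) := by
    intro f
    have h1 : |xiForm C.a ι (kphi f) (c f) x| + |xiForm C.a ι (kphi f) (c f) y| ≤ M :=
      Finset.single_le_sum
        (f := fun f => |xiForm C.a ι (kphi f) (c f) x| + |xiForm C.a ι (kphi f) (c f) y|)
        (fun f _ => by positivity) (Finset.mem_univ f)
    have h0 : 0 ≤ |xiForm C.a ι (kphi f) (c f) x| + |xiForm C.a ι (kphi f) (c f) y| := by
      positivity
    have h2 := hpos (kphi f)
    simp only [hh, Pi.smul_apply, smul_eq_mul]
    nlinarith
  have hx : x + h ∈ {x : Fin N → ℤ | ∀ f : F, 0 ≤ xiForm C.a ι (kphi f) (c f) x} := by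
    intro f
    rw [CellAux.xi_add C.diag hg]
    have := hbound f
    have := neg_abs_le (xiForm C.a ι (kphi f) (c f) x)
    have := abs_nonneg (xiForm C.a ι (kphi f) (c f) y)
    linarith
  have hy : y + h ∈ {x : Fin N → ℤ | ∀ f : F, 0 ≤ xiForm C.a ι (kphi f) (c f) x} := by
    intro f
    rw [CellAux.xi_add C.diag hg]
    have := hbound f
    have := neg_abs_le (xiForm C.a ι (kphi f) (c f) y)
    have := abs_nonneg (xiForm C.a ι (kphi f) (c f) x)
    linarith
  have hpath := hconn _ hx _ hy
  have hgn : CellAux.Good C.a ι (-h) := by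
    have := hg.smul (-1)
    rwa [neg_one_smul] at this
  have hstep : ∀ u w : Fin N → ℤ, (∃ i : Fin n, kashF C.a ι i u = w ∨ kashF C.a ι i w = u) →
      Relation.ReflTransGen (cellEdge C.a ι) (u + -h) (w + -h) := by
    rintro u w ⟨i, hi⟩
    by_cases hocc : ∃ m, ι m = i
    · apply Relation.ReflTransGen.single
      refine ⟨i, hocc, ?_⟩
      simp only [CellAux.kashF_add hgn]
      rcases hi with hi | hi
      · left; rw [hi]
      · right; rw [hi]
    · have hid : ∀ z, kashF C.a ι i z = z := by
        intro z
        unfold kashF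
        rw [dif_neg]
        rintro ⟨m, hm⟩
        apply hocc
        simp only [argminSet, Finset.mem_filter] at hm
        exact ⟨m, hm.1.2⟩
      rw [hid, hid] at hi
      have : u = w := by rcases hi with hi | hi <;> simp [hi]
      rw [this]
  have key : Relation.ReflTransGen (cellEdge C.a ι) (x + h + -h) (y + h + -h) := by
    generalize x + h = p at hpath
    generalize y + h = q at hpath
    induction hpath with
    | refl => exact Relation.ReflTransGen.refl
    | tail _ hs ih => exact ih.trans (hstep _ _ hs.2.2)
  simpa using key
end
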